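/- Generalized CK-extension (monogenic): Let Ω₀ ⊆ ℝ^{p+1} be a domain and A₀ ∈ C^ω(Ω₀, 𝔸) a real analytic function. Then there exists a unique sequence of real analytic functions {A_k}_{k≥1} ⊆ C^ω(Ω₀, 𝔸) such that the series f(x) = Σ_{k≥0} x_q^k A_k(x_p) converges in a p-symmetric slice domain Ω ⊆ Ω₀* := {x_p + x_q : x_p ∈ Ω₀, x_q ∈ ℝ^q} with Ω₀ ⊂ Ω and its sum f is left monogenic in Ω. The coefficients are necessarily A_{2k} = (Γ(q/2)/(2^{2k} k! Γ(k + q/2))) Δ_{x_p}^k A₀ and A_{2k+1} = (Γ(q/2)/(2^{2k+1} k! Γ(k + q/2 + 1))) Δ_{x_p}^k (D_{x_p} A₀); that is, f = GCK[A₀]. -/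

import Mathlib

open scoped BigOperators
open Filter Topology

namespace GPSM

variable (A : Type*) [NormedAddCommGroup A] [NormedSpace ℝ A] [Mul A] [One A]

/-- `A` is a real alternative algebra with unit `1`, of finite dimension `d > 1`,
equipped with an anti-involution `conj` (a real-linear map with `(a^c)^c = a`,
`(ab)^c = b^c a^c`, fixing the reals).  The associator is alternating (left/right
alternative laws). -/
structure IsAltStarAlg (conj : A → A) : Prop where
  finDim : FiniteDimensional ℝ A
  one_lt_finrank : 1 < Module.finrank ℝ A
  mul_add' : ∀ a b c : A, a * (b + c) = a * b + a * c
  add_mul' : ∀ a b c : A, (a + b) * c = a * c + b * c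
  smul_mul' : ∀ (r : ℝ) (a b : A), (r • a) * b = r • (a * b)
  mul_smul' : ∀ (r : ℝ) (a b : A), a * (r • b) = r • (a * b)
  one_mul' : ∀ a : A, 1 * a = a
  mul_one' : ∀ a : A, a * 1 = a
  alt_left : ∀ a b : A, a * (a * b) = a * a * b
  alt_right : ∀ a b : A, a * b * b = a * (b * b)
  conj_add : ∀ a b : A, conj (a + b) = conj a + conj b
  conj_smul : ∀ (r : ℝ) (a : A), conj (r • a) = r • conj a
  conj_conj : ∀ a : A, conj (conj a) = a
  conj_mul : ∀ a b : A, conj (a * b) = conj b * conj a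
  conj_one : conj 1 = 1

/-- `v 0, v 1, …, v m` is a hypercomplex basis of the hypercomplex subspace
`M = span(v 0, …, v m)` of `A`: `v 0 = 1`, `t(v s) = 0`, `n(v s) = 1`, the `v s`
anticommute for distinct `s, t ∈ {1,…,m}`, they are linearly independent, and
`M` is contained in the quadratic cone `Q_A`. -/
structure IsHypBasis (conj : A → A) (v : ℕ → A) (m : ℕ) : Prop where
  v_zero : v 0 = 1
  trace_zero : ∀ s, 1 ≤ s → s ≤ m → v s + conj (v s) = 0
  norm_one : ∀ s, 1 ≤ s → s ≤ m → v s * conj (v s) = 1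
  anticomm : ∀ s t, 1 ≤ s → s ≤ m → 1 ≤ t → t ≤ m → s ≠ t → v s * v t = -(v t * v s)
  indep : LinearIndependent ℝ (fun i : Fin (m + 1) => v i)
  mem_cone : ∀ x ∈ Submodule.span ℝ (Set.range fun i : Fin (m + 1) => v (i : ℕ)),
      ∃ tr nr : ℝ, x + conj x = tr • (1 : A) ∧ x * conj x = nr • (1 : A) ∧
        ((∃ r : ℝ, x = r • (1 : A)) ∨ tr ^ 2 < 4 * nr)

variable {A}

/-- Identification of `ℝ^{m+1}` with the hypercomplex subspace `M`:
`(x_0,…,x_m) ↦ Σ x_s • v s`. -/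
def emb (v : ℕ → A) (m : ℕ) (x : Fin (m + 1) → ℝ) : A :=
  ∑ s : Fin (m + 1), x s • v (s : ℕ)

/-- First `p+1` coordinates of a point of `M ≅ ℝ^{m+1}`, i.e. the `x_p`-part. -/
def projP (m p : ℕ) (x : Fin (m + 1) → ℝ) : Fin (p + 1) → ℝ := fun s =>
  if h : (s : ℕ) < m + 1 then x ⟨(s : ℕ), h⟩ else 0

/-- Inclusion `ℝ^{p+1} ⊆ ℝ^{m+1}` (remaining coordinates `0`). -/
def injP (m p : ℕ) (y : Fin (p + 1) → ℝ) : Fin (m + 1) → ℝ := fun s =>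
  if h : (s : ℕ) < p + 1 then y ⟨(s : ℕ), h⟩ else 0

/-- The coordinates of `x_q` (last `q = m - p` coordinates of `x`). -/
def xqpart (m p : ℕ) (x : Fin (m + 1) → ℝ) : Fin (m + 1) → ℝ := fun s =>
  if (s : ℕ) ≤ p then 0 else x s

/-- The coordinates of `x_p` inside `ℝ^{m+1}`. -/
def xppart (m p : ℕ) (x : Fin (m + 1) → ℝ) : Fin (m + 1) → ℝ := fun s =>
  if (s : ℕ) ≤ p then x s else 0

/-- `r = |x_q|`. -/
noncomputable def rad (m p : ℕ) (x : Fin (m + 1) → ℝ) : ℝ :=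
  Real.sqrt (∑ s : Fin (m + 1), (xqpart m p x s) ^ 2)

/-- `ω = x_q / |x_q|` (coordinates), `0` when `x_q = 0`. -/
noncomputable def normq (m p : ℕ) (x : Fin (m + 1) → ℝ) : Fin (m + 1) → ℝ :=
  (rad m p x)⁻¹ • xqpart m p x

/-- The reflection `x = x_p + x_q ↦ x_⋄ = x_p - x_q`. -/
def reflP (m p : ℕ) (x : Fin (m + 1) → ℝ) : Fin (m + 1) → ℝ := fun s =>
  if (s : ℕ) ≤ p then x s else -x s

/-- The sphere `𝕊 = {x_q ∈ span(v_{p+1},…,v_m) : x_q² = -1}`, in coordinates. -/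
def Sph (v : ℕ → A) (m p : ℕ) : Set (Fin (m + 1) → ℝ) :=
  {w | (∀ s : Fin (m + 1), (s : ℕ) ≤ p → w s = 0) ∧ emb v m w * emb v m w = -1}

/-- The point `x_p + r ω` of `M ≅ ℝ^{m+1}`. -/
def pt (m p : ℕ) (w : Fin (m + 1) → ℝ) (y : Fin (p + 1) → ℝ) (r : ℝ) :
    Fin (m + 1) → ℝ :=
  injP m p y + r • w

/-- The slice `Ω_ω ⊆ ℝ^{p+2}` of `Ω` at `ω`. -/
def sliceSet (m p : ℕ) (Ω : Set (Fin (m + 1) → ℝ)) (w : Fin (m + 1) → ℝ) :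
    Set ((Fin (p + 1) → ℝ) × ℝ) := {z | pt m p w z.1 z.2 ∈ Ω}

/-- The restriction `f_ω` of `f` to the slice at `ω`, as a function on `ℝ^{p+2}`. -/
def sliceFun (m p : ℕ) (f : (Fin (m + 1) → ℝ) → A) (w : Fin (m + 1) → ℝ) :
    (Fin (p + 1) → ℝ) × ℝ → A := fun z => f (pt m p w z.1 z.2)

/-- Partial derivative `∂_{x_s}` of a function on `ℝ^{m+1}`. -/
noncomputable def pdF (m : ℕ) (s : Fin (m + 1)) (f : (Fin (m + 1) → ℝ) → A)
    (x : Fin (m + 1) → ℝ) : A := fderiv ℝ f x (Pi.single s 1)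

/-- Partial derivative `∂_{x_s}` of a function on `ℝ^{p+1}`. -/
noncomputable def pdP (p : ℕ) (s : Fin (p + 1)) (g : (Fin (p + 1) → ℝ) → A)
    (y : Fin (p + 1) → ℝ) : A := fderiv ℝ g y (Pi.single s 1)

/-- Partial derivative `∂_{x_s}` of a function on `ℝ^{p+2} = ℝ^{p+1} × ℝ`. -/
noncomputable def pdSx (p : ℕ) (s : Fin (p + 1)) (G : (Fin (p + 1) → ℝ) × ℝ → A)
    (z : (Fin (p + 1) → ℝ) × ℝ) : A := fderiv ℝ G z (Pi.single s 1, 0)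

/-- Partial derivative `∂_r` of a function on `ℝ^{p+2} = ℝ^{p+1} × ℝ`. -/
noncomputable def pdSr (p : ℕ) (G : (Fin (p + 1) → ℝ) × ℝ → A)
    (z : (Fin (p + 1) → ℝ) × ℝ) : A := fderiv ℝ G z (0, 1)

/-- Second partial derivative `∂_r²`. -/
noncomputable def pdSr2 (p : ℕ) (G : (Fin (p + 1) → ℝ) × ℝ → A)
    (z : (Fin (p + 1) → ℝ) × ℝ) : A := pdSr p (pdSr p G) z

/-- The operator `Σ_{lo ≤ s ≤ hi} v_s ∂_{x_s}` on functions on `ℝ^{m+1}`.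
`Dop v m 0 p` is `D_{x_p}`, `Dop v m (p+1) m` is `D_{x_q}`, `Dop v m 0 m` is `D_x`. -/
noncomputable def Dop (v : ℕ → A) (m lo hi : ℕ) (f : (Fin (m + 1) → ℝ) → A)
    (x : Fin (m + 1) → ℝ) : A :=
  ∑ s : Fin (m + 1), if lo ≤ (s : ℕ) ∧ (s : ℕ) ≤ hi then v (s : ℕ) * pdF m s f x else 0

/-- The conjugate operator `∂_{x_0} - Σ_{1 ≤ s ≤ hi} v_s ∂_{x_s}` on functions on
`ℝ^{m+1}`; `Dbarop v m p` is `D̄_{x_p}`, `Dbarop v m m` is `D̄_x`. -/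
noncomputable def Dbarop (v : ℕ → A) (m hi : ℕ) (f : (Fin (m + 1) → ℝ) → A)
    (x : Fin (m + 1) → ℝ) : A :=
  pdF m 0 f x -
    ∑ s : Fin (m + 1), if 1 ≤ (s : ℕ) ∧ (s : ℕ) ≤ hi then v (s : ℕ) * pdF m s f x else 0

/-- The operator `D_{x_p} = Σ_{s=0}^p v_s ∂_{x_s}` on functions on `ℝ^{p+1}`. -/
noncomputable def DopP (v : ℕ → A) (p : ℕ) (g : (Fin (p + 1) → ℝ) → A)
    (y : Fin (p + 1) → ℝ) : A :=
  ∑ s : Fin (p + 1), v (s : ℕ) * pdP p s g y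

/-- The operator `D̄_{x_p} = ∂_{x_0} - Σ_{s=1}^p v_s ∂_{x_s}` on functions on `ℝ^{p+1}`. -/
noncomputable def DbaropP (v : ℕ → A) (p : ℕ) (g : (Fin (p + 1) → ℝ) → A)
    (y : Fin (p + 1) → ℝ) : A :=
  pdP p 0 g y - ∑ s : Fin (p + 1), if 1 ≤ (s : ℕ) then v (s : ℕ) * pdP p s g y else 0

/-- The operator `D_{x_p}` on functions on `ℝ^{p+2} = ℝ^{p+1} × ℝ`. -/
noncomputable def DopSx (v : ℕ → A) (p : ℕ) (G : (Fin (p + 1) → ℝ) × ℝ → A)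
    (z : (Fin (p + 1) → ℝ) × ℝ) : A :=
  ∑ s : Fin (p + 1), v (s : ℕ) * pdSx p s G z

/-- The operator `D̄_{x_p}` on functions on `ℝ^{p+2} = ℝ^{p+1} × ℝ`. -/
noncomputable def DbaropSx (v : ℕ → A) (p : ℕ) (G : (Fin (p + 1) → ℝ) × ℝ → A)
    (z : (Fin (p + 1) → ℝ) × ℝ) : A :=
  pdSx p 0 G z - ∑ s : Fin (p + 1), if 1 ≤ (s : ℕ) then v (s : ℕ) * pdSx p s G z else 0

/-- The Laplacian `Δ_x` on functions on `ℝ^{m+1}`. -/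
noncomputable def lapF (m : ℕ) (f : (Fin (m + 1) → ℝ) → A)
    (x : Fin (m + 1) → ℝ) : A :=
  ∑ s : Fin (m + 1), pdF m s (pdF m s f) x

/-- The Laplacian `Δ_{x_p}` on functions on `ℝ^{p+1}`. -/
noncomputable def lapP (p : ℕ) (g : (Fin (p + 1) → ℝ) → A)
    (y : Fin (p + 1) → ℝ) : A :=
  ∑ s : Fin (p + 1), pdP p s (pdP p s g) y

/-- Iterated Laplacian `Δ_x^k`. -/
noncomputable def lapIterF (m k : ℕ) (f : (Fin (m + 1) → ℝ) → A) :
    (Fin (m + 1) → ℝ) → A :=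
  (fun g => lapF m g)^[k] f

/-- Iterated Laplacian `Δ_{x_p}^k`. -/
noncomputable def lapIterP (p k : ℕ) (g : (Fin (p + 1) → ℝ) → A) :
    (Fin (p + 1) → ℝ) → A :=
  (fun h => lapP p h)^[k] g

/-- The Laplacian `Δ_{x'} = Δ_{x_p} + ∂_r²` on functions on `ℝ^{p+2}`. -/
noncomputable def lapSx (p : ℕ) (G : (Fin (p + 1) → ℝ) × ℝ → A)
    (z : (Fin (p + 1) → ℝ) × ℝ) : A :=
  (∑ s : Fin (p + 1), pdSx p s (pdSx p s G) z) + pdSr2 p G z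

/-- The slice Cauchy-Riemann operator `D_ω = D_{x_p} + ω ∂_r` applied to a function
on `ℝ^{p+2}`, where `ω` is given in coordinates by `w`. -/
noncomputable def DomCR (v : ℕ → A) (m p : ℕ) (w : Fin (m + 1) → ℝ)
    (G : (Fin (p + 1) → ℝ) × ℝ → A) (z : (Fin (p + 1) → ℝ) × ℝ) : A :=
  DopSx v p G z + emb v m w * pdSr p G z

/-- `f` is left generalized partial-slice monogenic (of type `(p, m-p)`) on `Ω`. -/
def GSM (v : ℕ → A) (m p : ℕ) (f : (Fin (m + 1) → ℝ) → A)
    (Ω : Set (Fin (m + 1) → ℝ)) : Prop :=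
  ∀ w ∈ Sph v m p, ContDiffOn ℝ 1 (sliceFun m p f w) (sliceSet m p Ω w) ∧
    ∀ z ∈ sliceSet m p Ω w, DomCR v m p w (sliceFun m p f w) z = 0

/-- `Ω` is partially symmetric with respect to `ℝ^{p+1}`. -/
def PSym (v : ℕ → A) (m p : ℕ) (Ω : Set (Fin (m + 1) → ℝ)) : Prop :=
  ∀ x ∈ Ω, ∀ w ∈ Sph v m p, xppart m p x + rad m p x • w ∈ Ω

/-- `Ω` is a slice domain: a domain meeting `ℝ^{p+1}` all of whose slices are
domains in `ℝ^{p+2}`. -/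
def SliceDomain (v : ℕ → A) (m p : ℕ) (Ω : Set (Fin (m + 1) → ℝ)) : Prop :=
  IsOpen Ω ∧ IsConnected Ω ∧ (∃ x ∈ Ω, xqpart m p x = 0) ∧
    ∀ w ∈ Sph v m p, IsConnected (sliceSet m p Ω w)

/-- The reflection `(x_p, r) ↦ (x_p, -r)` of `ℝ^{p+2}`. -/
def reflD (p : ℕ) (z : (Fin (p + 1) → ℝ) × ℝ) : (Fin (p + 1) → ℝ) × ℝ := (z.1, -z.2)

/-- The p-symmetric completion `Ω_D ⊆ M` of `D ⊆ ℝ^{p+2}`. -/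
def OmegaD (v : ℕ → A) (m p : ℕ) (D : Set ((Fin (p + 1) → ℝ) × ℝ)) :
    Set (Fin (m + 1) → ℝ) :=
  {x | ∃ w ∈ Sph v m p, ∃ z ∈ D, x = pt m p w z.1 z.2}

/-- `(F₁, F₂)` satisfies the even-odd (stem function) conditions on `D`. -/
def IsStem (p : ℕ) (D : Set ((Fin (p + 1) → ℝ) × ℝ))
    (F₁ F₂ : (Fin (p + 1) → ℝ) × ℝ → A) : Prop :=
  ∀ z ∈ D, F₁ (reflD p z) = F₁ z ∧ F₂ (reflD p z) = -F₂ z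

/-- `f` is the generalized partial-slice function induced by the stem `(F₁, F₂)`:
`f(x_p + rω) = F₁(x_p, r) + ω F₂(x_p, r)`. -/
def Induced (v : ℕ → A) (m p : ℕ) (D : Set ((Fin (p + 1) → ℝ) × ℝ))
    (F₁ F₂ : (Fin (p + 1) → ℝ) × ℝ → A) (f : (Fin (m + 1) → ℝ) → A) : Prop :=
  ∀ w ∈ Sph v m p, ∀ z ∈ D, f (pt m p w z.1 z.2) = F₁ z + emb v m w * F₂ z

/-- The generalized Cauchy-Riemann system for the stem `(F₁, F₂)` on `D`. -/
def StemCR (v : ℕ → A) (p : ℕ) (D : Set ((Fin (p + 1) → ℝ) × ℝ))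
    (F₁ F₂ : (Fin (p + 1) → ℝ) × ℝ → A) : Prop :=
  ∀ z ∈ D, DopSx v p F₁ z - pdSr p F₂ z = 0 ∧ DbaropSx v p F₂ z + pdSr p F₁ z = 0

/-- `f` is generalized partial-slice regular on `Ω_D`. -/
def MemGSR (v : ℕ → A) (m p : ℕ) (D : Set ((Fin (p + 1) → ℝ) × ℝ))
    (f : (Fin (m + 1) → ℝ) → A) : Prop :=
  ∃ F₁ F₂ : (Fin (p + 1) → ℝ) × ℝ → A, IsStem p D F₁ F₂ ∧
    ContDiffOn ℝ 1 F₁ D ∧ ContDiffOn ℝ 1 F₂ D ∧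
    Induced v m p D F₁ F₂ f ∧ StemCR v p D F₁ F₂

/-- `f` is a generalized partial-slice function on `Ω`. -/
def MemGS (v : ℕ → A) (m p : ℕ) (Ω : Set (Fin (m + 1) → ℝ))
    (f : (Fin (m + 1) → ℝ) → A) : Prop :=
  ∃ F₁ F₂ : (Fin (p + 1) → ℝ) × ℝ → A,
    (∀ z : (Fin (p + 1) → ℝ) × ℝ, F₁ (reflD p z) = F₁ z ∧ F₂ (reflD p z) = -F₂ z) ∧
    ∀ x ∈ Ω, f x = F₁ (projP m p x, rad m p x) +
      emb v m (normq m p x) * F₂ (projP m p x, rad m p x)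

/-- Non-associative power: `a^n` with products taken from the right. -/
def apow (a : A) (n : ℕ) : A := (fun b => a * b)^[n] 1

/-- Partial even part `PE[f](x) = (f(x) + f(x_⋄))/2`. -/
noncomputable def PE (m p : ℕ) (f : (Fin (m + 1) → ℝ) → A)
    (x : Fin (m + 1) → ℝ) : A := (2 : ℝ)⁻¹ • (f x + f (reflP m p x))

/-- Partial odd part `PO[f](x) = (f(x) - f(x_⋄))/2`. -/
noncomputable def PO (m p : ℕ) (f : (Fin (m + 1) → ℝ) → A)
    (x : Fin (m + 1) → ℝ) : A := (2 : ℝ)⁻¹ • (f x - f (reflP m p x))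

/-- `Ω₀* = {x_p + x_q : x_p ∈ Ω₀, x_q ∈ ℝ^q}`. -/
def Omega0star (m p : ℕ) (Ω₀ : Set (Fin (p + 1) → ℝ)) : Set (Fin (m + 1) → ℝ) :=
  {x | projP m p x ∈ Ω₀}

/-- The spherical derivative `f'_s(x) = (1/2) x_q⁻¹ (f(x) - f(x_⋄))`
(using `x_q⁻¹ = -x_q/|x_q|²`). -/
noncomputable def sder (v : ℕ → A) (m p : ℕ) (f : (Fin (m + 1) → ℝ) → A)
    (x : Fin (m + 1) → ℝ) : A :=
  -(((2 : ℝ) * rad m p x ^ 2)⁻¹) • (emb v m (xqpart m p x) * (f x - f (reflP m p x)))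

/-- The spherical Dirac operator
`Γ f = -(1/2) Σ_{p+1 ≤ i,j ≤ m} v_i (v_j (L_{ij} f))`. -/
noncomputable def sphericalGamma (v : ℕ → A) (m p : ℕ) (f : (Fin (m + 1) → ℝ) → A)
    (x : Fin (m + 1) → ℝ) : A :=
  -((2 : ℝ)⁻¹) • ∑ i : Fin (m + 1), ∑ j : Fin (m + 1),
    if p < (i : ℕ) ∧ p < (j : ℕ) then
      v (i : ℕ) * (v (j : ℕ) * (x i • pdF m j f x - x j • pdF m i f x)) else 0

/-- The slice Cauchy-Riemann operator `D_ω` applied to (the slice restriction of) a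
function `f` on `M`, at the point `x` (with `ω = x_q/|x_q|`). -/
noncomputable def DomCRat (v : ℕ → A) (m p : ℕ) (f : (Fin (m + 1) → ℝ) → A)
    (x : Fin (m + 1) → ℝ) : A :=
  DomCR v m p (normq m p x) (sliceFun m p f (normq m p x)) (projP m p x, rad m p x)

/-- `f` is left monogenic on `Ω`: `f ∈ C¹` and `D_x f = 0`. -/
def Monogenic (v : ℕ → A) (m : ℕ) (f : (Fin (m + 1) → ℝ) → A)
    (Ω : Set (Fin (m + 1) → ℝ)) : Prop :=
  ContDiffOn ℝ 1 f Ω ∧ ∀ x ∈ Ω, Dop v m 0 m f x = 0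

/-- `f` is harmonic on `Ω`: `f ∈ C²` and `Δ_x f = 0`. -/
def Harmonic (m : ℕ) (f : (Fin (m + 1) → ℝ) → A)
    (Ω : Set (Fin (m + 1) → ℝ)) : Prop :=
  ContDiffOn ℝ 2 f Ω ∧ ∀ x ∈ Ω, lapF m f x = 0

/-- A family of functions converges normally (locally a summable uniform bound). -/
def NormallyConvOn {E F : Type*} [TopologicalSpace E] [NormedAddCommGroup F]
    (u : ℕ → E → F) (s : Set E) : Prop :=
  ∀ x ∈ s, ∃ U ∈ nhds x, ∃ c : ℕ → ℝ, Summable c ∧ ∀ k : ℕ, ∀ y ∈ U, ‖u k y‖ ≤ c k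

/-- The generalized partial-slice CK-extension
`CK[f₀](x) = Σ_k (r^{2k}/(2k)!)(-Δ_{x_p})^k f₀(x_p)
  + ω Σ_k (r^{2k+1}/(2k+1)!)(-Δ_{x_p})^k (D_{x_p} f₀)(x_p)`. -/
noncomputable def CKe (v : ℕ → A) (m p : ℕ) (f₀ : (Fin (p + 1) → ℝ) → A)
    (x : Fin (m + 1) → ℝ) : A :=
  (∑' k : ℕ, (((-1 : ℝ) ^ k * rad m p x ^ (2 * k)) / (2 * k).factorial) •
      lapIterP p k f₀ (projP m p x)) +
  emb v m (normq m p x) *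
    ∑' k : ℕ, (((-1 : ℝ) ^ k * rad m p x ^ (2 * k + 1)) / (2 * k + 1).factorial) •
      lapIterP p k (DopP v p f₀) (projP m p x)

/-- The coefficient `Γ(q/2)(-1)^k r^{2k} / (2^{2k} k! Γ(k + q/2))`. -/
noncomputable def hgckC (q k : ℕ) (r : ℝ) : ℝ :=
  (Real.Gamma ((q : ℝ) / 2) * (-1) ^ k * r ^ (2 * k)) /
    (2 ^ (2 * k) * (k.factorial : ℝ) * Real.Gamma ((k : ℝ) + (q : ℝ) / 2))

/-- The coefficient `Γ(q/2)(-1)^k r^{2k} / (2^{2k+1} k! Γ(k + q/2 + 1))`. -/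
noncomputable def gckC' (q k : ℕ) (r : ℝ) : ℝ :=
  (Real.Gamma ((q : ℝ) / 2) * (-1) ^ k * r ^ (2 * k)) /
    (2 ^ (2 * k + 1) * (k.factorial : ℝ) * Real.Gamma ((k : ℝ) + (q : ℝ) / 2 + 1))

/-- The coefficient `Γ(q/2 + 1)(-1)^k r^{2k} / (2^{2k} k! Γ(k + q/2 + 1))`. -/
noncomputable def hgckC' (q k : ℕ) (r : ℝ) : ℝ :=
  (Real.Gamma ((q : ℝ) / 2 + 1) * (-1) ^ k * r ^ (2 * k)) /
    (2 ^ (2 * k) * (k.factorial : ℝ) * Real.Gamma ((k : ℝ) + (q : ℝ) / 2 + 1))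

/-- The monogenic generalized CK-extension `GCK[A₀]`. -/
noncomputable def GCKe (v : ℕ → A) (m p : ℕ) (A₀ : (Fin (p + 1) → ℝ) → A)
    (x : Fin (m + 1) → ℝ) : A :=
  (∑' k : ℕ, hgckC (m - p) k (rad m p x) • lapIterP p k A₀ (projP m p x)) +
  emb v m (xqpart m p x) *
    ∑' k : ℕ, gckC' (m - p) k (rad m p x) • lapIterP p k (DopP v p A₀) (projP m p x)

/-- The harmonic generalized CK-extension `HGCK[A₀, A₁]`. -/
noncomputable def HGCKe (v : ℕ → A) (m p : ℕ) (A₀ A₁ : (Fin (p + 1) → ℝ) → A)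
    (x : Fin (m + 1) → ℝ) : A :=
  (∑' k : ℕ, hgckC (m - p) k (rad m p x) • lapIterP p k A₀ (projP m p x)) +
  emb v m (xqpart m p x) *
    ∑' k : ℕ, hgckC' (m - p) k (rad m p x) • lapIterP p k A₁ (projP m p x)

/-- The operator `(1/r)∂_r`, extended to `r = 0` by its limit `∂_r²` (on even
functions). -/
noncomputable def T1 (p : ℕ) (G : (Fin (p + 1) → ℝ) × ℝ → A) :
    (Fin (p + 1) → ℝ) × ℝ → A := fun z =>
  if z.2 = 0 then pdSr2 p G z else (z.2)⁻¹ • pdSr p G z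

/-- The operator `∂_r ∘ (1/r)`, extended to `r = 0` by its limit `(1/2)∂_r²` (on odd
functions). -/
noncomputable def T2 (p : ℕ) (G : (Fin (p + 1) → ℝ) × ℝ → A) :
    (Fin (p + 1) → ℝ) × ℝ → A := fun z =>
  if z.2 = 0 then (2 : ℝ)⁻¹ • pdSr2 p G z
  else fderiv ℝ (fun t : ℝ => t⁻¹ • G (z.1, t)) z.2 1

/-- `C_q(k) = (q-1)(q-3)⋯(q-2k+1)`, `C_q(0) = 1`. -/
noncomputable def cq (q k : ℕ) : ℝ :=
  ∏ i ∈ Finset.range k, ((q : ℝ) - (2 * (i : ℝ) + 1))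

/-- Double factorial. -/
def dfac : ℕ → ℕ
  | 0 => 1
  | 1 => 1
  | n + 2 => (n + 2) * dfac n

/-- The Fueter-Sce constant `γ_q = (-1)^{(q-1)/2} (q-1)!!/(q-2)!!`. -/
noncomputable def gammaQ (q : ℕ) : ℝ :=
  (-1 : ℝ) ^ ((q - 1) / 2) * (dfac (q - 1) : ℝ) / (dfac (q - 2) : ℝ)

section CliffordPart

variable {V : Type*} [NormedAddCommGroup V] [NormedSpace ℝ V]

/-- Clifford-type relations for a family of operators. -/
structure Cl (L : ℕ → V →L[ℝ] V) (m : ℕ) : Prop where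
  zero : L 0 = 1
  sq : ∀ s, 1 ≤ s → s ≤ m → L s * L s = -1
  anti : ∀ s t, 1 ≤ s → s ≤ m → 1 ≤ t → t ≤ m → s ≠ t → L s * L t = -(L t * L s)

/-- conjugate family -/
def Lb (L : ℕ → V →L[ℝ] V) (s : ℕ) : V →L[ℝ] V := if s = 0 then L s else -L s

/-- alternating family -/
def Lk (L : ℕ → V →L[ℝ] V) (k : ℕ) : ℕ → V →L[ℝ] V := if Even k then L else Lb L

theorem Lb_Lb (L : ℕ → V →L[ℝ] V) : Lb (Lb L) = L := by
  funext s; by_cases h : s = 0 <;> simp [Lb, h]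

theorem Lk_succ (L : ℕ → V →L[ℝ] V) (k : ℕ) : Lk L (k + 1) = Lb (Lk L k) := by
  by_cases h : Even k
  · have h' : ¬ Even (k + 1) := by simpa [Nat.even_add_one] using h
    simp [Lk, h, h']
  · have h' : Even (k + 1) := by simpa [Nat.even_add_one] using h
    simp [Lk, h, h', Lb_Lb]

/-- the linear map `PhiL` with `DL g y = PhiL (fderiv g y)` -/
noncomputable def PhiL (p : ℕ) (L : ℕ → V →L[ℝ] V) :
    ((Fin (p + 1) → ℝ) →L[ℝ] V) →L[ℝ] V :=
  ∑ s : Fin (p + 1), (L s).comp (ContinuousLinearMap.apply ℝ V (Pi.single s (1 : ℝ)))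

/-- the first order operator -/
noncomputable def DL (p : ℕ) (L : ℕ → V →L[ℝ] V) (g : (Fin (p + 1) → ℝ) → V)
    (y : Fin (p + 1) → ℝ) : V := PhiL p L (fderiv ℝ g y)

theorem PhiL_apply (p : ℕ) (L : ℕ → V →L[ℝ] V) (T : (Fin (p + 1) → ℝ) →L[ℝ] V) :
    PhiL p L T = ∑ s : Fin (p + 1), L s (T (Pi.single s 1)) := by
  simp [PhiL]

/-- coefficients of the recursion -/
def cc (q : ℕ) : ℕ → ℕ
  | 0 => 0
  | 1 => q
  | k + 2 => cc q k + 2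

theorem le_cc (q : ℕ) (hq : 1 ≤ q) : ∀ k, k ≤ cc q k
  | 0 => by simp
  | 1 => by simpa [cc] using hq
  | k + 2 => by have := le_cc q hq k; simp only [cc]; omega

theorem cc_le (q : ℕ) : ∀ k, cc q k ≤ k + q
  | 0 => by simp [cc]
  | 1 => by simp [cc]
  | k + 2 => by have := cc_le q k; simp only [cc]; omega

theorem cc_even (q : ℕ) : ∀ k, cc q (2 * k) = 2 * k
  | 0 => by simp [cc]
  | k + 1 => by
    have := cc_even q k
    rw [show 2 * (k + 1) = 2 * k + 2 by ring]; simp only [cc]; omega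

theorem cc_odd (q : ℕ) : ∀ k, cc q (2 * k + 1) = 2 * k + q
  | 0 => by simp [cc]
  | k + 1 => by
    have := cc_odd q k
    rw [show 2 * (k + 1) + 1 = (2 * k + 1) + 2 by ring]; simp only [cc]; omega

/-- `∑_{s>p} x_s L_s`, linear in `x`. -/
noncomputable def Mx (L : ℕ → V →L[ℝ] V) (m p : ℕ) :
    (Fin (m + 1) → ℝ) →L[ℝ] (V →L[ℝ] V) :=
  ∑ s : Fin (m + 1), if p < (s : ℕ) then
    (ContinuousLinearMap.proj (R := ℝ) (φ := fun _ : Fin (m + 1) => ℝ) s).smulRight (L s) else 0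

theorem Mx_apply (L : ℕ → V →L[ℝ] V) (m p : ℕ) (x : Fin (m + 1) → ℝ) :
    Mx L m p x = ∑ s : Fin (m + 1), if p < (s : ℕ) then x s • L s else 0 := by
  rw [Mx, ContinuousLinearMap.sum_apply]
  refine Finset.sum_congr rfl fun s _ => ?_
  split_ifs <;> simp

/-- `|x_q|²` -/
def rsq (m p : ℕ) (x : Fin (m + 1) → ℝ) : ℝ := ∑ s : Fin (m + 1), if p < (s : ℕ) then x s ^ 2 else 0

theorem rad_eq (m p : ℕ) (x : Fin (m + 1) → ℝ) : rad m p x = Real.sqrt (rsq m p x) := by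
  unfold rad rsq xqpart
  congr 1
  refine Finset.sum_congr rfl fun s _ => ?_
  by_cases h : (s : ℕ) ≤ p
  · simp [h, not_lt.2 h]
  · simp [h, not_le.1 h]

variable {L : ℕ → V →L[ℝ] V} {m p : ℕ}

theorem Mx_single_le (s : Fin (m + 1)) (hs : (s : ℕ) ≤ p) : Mx L m p (Pi.single s 1) = 0 := by
  rw [Mx_apply]
  refine Finset.sum_eq_zero fun t _ => ?_
  split_ifs with h
  · have : t ≠ s := by rintro rfl; omega
    simp [this]
  · rfl

theorem Mx_single_gt (s : Fin (m + 1)) (hs : p < (s : ℕ)) : Mx L m p (Pi.single s 1) = L s := by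
  rw [Mx_apply, Finset.sum_eq_single s]
  · simp [hs]
  · intro t _ h; simp [h]
  · simp

theorem Cl.anti_Mx (h : Cl L m) (s : ℕ) (h1 : 1 ≤ s) (hs : s ≤ p) (hp : p ≤ m) (x) :
    L s * Mx L m p x = -(Mx L m p x * L s) := by
  rw [Mx_apply, Finset.mul_sum, Finset.sum_mul, ← Finset.sum_neg_distrib]
  refine Finset.sum_congr rfl fun t _ => ?_
  split_ifs with ht
  · rw [mul_smul_comm, smul_mul_assoc, h.anti s t h1 (by omega) (by omega) (by omega) (by omega),
      smul_neg]
  · simp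

theorem Cl.comm_Mx (h : Cl L m) (s : Fin (m + 1)) (hs : p < (s : ℕ)) (x) :
    L s * Mx L m p x + Mx L m p x * L s = -(2 * x s) • (1 : V →L[ℝ] V) := by
  rw [Mx_apply, Finset.mul_sum, Finset.sum_mul, ← Finset.sum_add_distrib, Finset.sum_eq_single s]
  · simp only [hs, if_true]
    rw [mul_smul_comm, smul_mul_assoc, h.sq s (by omega) (by omega)]
    module
  · intro t _ hts
    split_ifs with ht
    · have : (s : ℕ) ≠ t := fun h => hts (Fin.ext h.symm)
      rw [mul_smul_comm, smul_mul_assoc, h.anti s t (by omega) (by omega) (by omega) (by omega) this]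
      module
    · simp
  · simp

theorem Cl.Mx_sq (h : Cl L m) (x) :
    Mx L m p x * Mx L m p x = -(rsq m p x) • (1 : V →L[ℝ] V) := by
  have h2 : (2 : ℝ) • (Mx L m p x * Mx L m p x) = (2 : ℝ) • (-(rsq m p x) • (1 : V →L[ℝ] V)) := by
    have e1 : (2 : ℝ) • (Mx L m p x * Mx L m p x)
        = (∑ s : Fin (m + 1), if p < (s : ℕ) then x s • L s else 0) * Mx L m p x
          + Mx L m p x * (∑ s : Fin (m + 1), if p < (s : ℕ) then x s • L s else 0) := by
      rw [← Mx_apply, two_smul]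
    rw [e1, Finset.mul_sum, Finset.sum_mul, ← Finset.sum_add_distrib, rsq, ← Finset.sum_neg_distrib,
      Finset.sum_smul, Finset.smul_sum]
    refine Finset.sum_congr rfl fun s _ => ?_
    split_ifs with hs
    · rw [mul_smul_comm, smul_mul_assoc, ← smul_add, h.comm_Mx s hs]
      module
    · simp
  exact smul_right_injective _ (two_ne_zero) h2

theorem Cl.mul_pow (h : Cl L m) (s : ℕ) (hs : s ≤ p) (hp : p ≤ m) (x) (k : ℕ) :
    L s * Mx L m p x ^ k = Mx L m p x ^ k * Lk L k s := by
  have key : ∀ k, Lk L k s * Mx L m p x = Mx L m p x * Lk L (k + 1) s := by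
    intro k
    rw [Lk_succ]
    rcases Nat.eq_zero_or_pos s with rfl | h1
    · have : Lk L k 0 = 1 := by unfold Lk; split_ifs <;> simp [Lb, h.zero]
      simp [Lb, this]
    · have := h.anti_Mx s h1 hs hp x
      have hne : s ≠ 0 := by omega
      unfold Lk
      split_ifs <;> simp [Lb, hne, this]
  induction k with
  | zero => simp [Lk]
  | succ k ih => rw [pow_succ, ← mul_assoc, ih, mul_assoc, key, mul_assoc]

/-- derivative of the power in direction `H`. -/
noncomputable def dpow (M H : V →L[ℝ] V) : ℕ → (V →L[ℝ] V)
  | 0 => 0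
  | k + 1 => H * M ^ k + M * dpow M H k

theorem dpow_zero_dir (M : V →L[ℝ] V) : ∀ k, dpow M 0 k = 0
  | 0 => rfl
  | k + 1 => by simp [dpow, dpow_zero_dir M k]

theorem norm_dpow_le (M H : V →L[ℝ] V) (η : ℝ) (hη : 0 < η) (hM : ‖M‖ ≤ η) :
    ∀ k, ‖dpow M H k‖ ≤ k * η ^ k / η * ‖H‖
  | 0 => by simp [dpow]
  | k + 1 => by
    have ih := norm_dpow_le M H η hη hM k
    have hpow : ‖M ^ k‖ ≤ η ^ k := by
      rcases subsingleton_or_nontrivial V with hV | hV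
      · rw [Subsingleton.elim (M ^ k) 0, norm_zero]; positivity
      · exact (norm_pow_le M k).trans (by gcongr)
    calc ‖dpow M H (k + 1)‖ ≤ ‖H‖ * ‖M ^ k‖ + ‖M‖ * ‖dpow M H k‖ := by
          rw [dpow]
          exact (norm_add_le _ _).trans (add_le_add (norm_mul_le _ _) (norm_mul_le _ _))
      _ ≤ ‖H‖ * η ^ k + η * (k * η ^ k / η * ‖H‖) := by gcongr
      _ = _ := by push_cast; field_simp; ring

theorem Cl.sum_dpow (h : Cl L m) (hp : p < m) (x) : ∀ k,
    (∑ s : Fin (m + 1), if p < (s : ℕ) then L s * dpow (Mx L m p x) (L s) k else 0)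
      = -(cc (m - p) k : ℝ) • Mx L m p x ^ (k - 1)
  | 0 => by simp [dpow, cc]
  | 1 => by
    have : ∀ s : Fin (m + 1), (if p < (s : ℕ) then L s * dpow (Mx L m p x) (L s) 1 else 0)
        = -(if p < (s : ℕ) then (1 : V →L[ℝ] V) else 0) := by
      intro s
      split_ifs with hs
      · simp [dpow, h.sq s (by omega) (by omega)]
      · simp
    rw [Finset.sum_congr rfl fun s _ => this s, Finset.sum_neg_distrib, ← Finset.sum_filter,
      Finset.sum_const]
    have hc : (Finset.univ.filter fun s : Fin (m + 1) => p < (s : ℕ)).card = m - p := by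
      have : (Finset.univ.filter fun s : Fin (m + 1) => p < (s : ℕ))
          = Finset.Ioi (⟨p, by omega⟩ : Fin (m + 1)) := by
        ext s; simp [Fin.lt_def]
      rw [this, Fin.card_Ioi]; simp
    rw [hc]
    simp [cc, ← Nat.cast_smul_eq_nsmul ℝ]
  | k + 2 => by
    have ih := h.sum_dpow hp x k
    set M := Mx L m p x with hM
    have hsq := h.Mx_sq (p := p) x
    rw [← hM] at hsq
    have step : ∀ s : Fin (m + 1), (if p < (s : ℕ) then L s * dpow M (L s) (k + 2) else 0)
        = (-2 : ℝ) • ((if p < (s : ℕ) then x s • L s else 0) * M ^ k)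
          + (-(rsq m p x)) • (if p < (s : ℕ) then L s * dpow M (L s) k else 0) := by
      intro s
      split_ifs with hs
      · have e : dpow M (L s) (k + 2) = (L s * M + M * L s) * M ^ k + (M * M) * dpow M (L s) k := by
          simp only [dpow, pow_succ']; noncomm_ring
        rw [e, h.comm_Mx s hs, hsq]
        simp only [smul_mul_assoc, one_mul, mul_add, mul_smul_comm, smul_smul]
        module
      · simp
    rw [Finset.sum_congr rfl fun s _ => step s, Finset.sum_add_distrib, ← Finset.smul_sum,
      ← Finset.smul_sum, ih, ← Finset.sum_mul, ← Mx_apply, ← hM]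
    rcases k with _ | k
    · simp [cc]
    · have : (-(rsq m p x)) • M ^ k = M ^ (k + 2) := by
        rw [pow_succ', pow_succ', ← mul_assoc, hsq]; simp
      have e2 : M ^ (k + 1 + 2 - 1) = M ^ (k + 2) := rfl
      have e3 : M * M ^ (k + 1) = M ^ (k + 2) := (pow_succ' _ _).symm
      rw [e2, e3, Nat.add_sub_cancel, smul_comm, this]
      simp only [cc]; push_cast; module

end CliffordPart

section CauchyPart

variable {V : Type*} [NormedAddCommGroup V] [NormedSpace ℝ V]

theorem cauchy_bound {E : Type*} [NormedAddCommGroup E] [NormedSpace ℝ E] [CompleteSpace V]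
    (g : E → V) (y0 : E) (hg : AnalyticAt ℝ g y0) :
    ∃ ε > 0, ∃ C ≥ 0, ∃ R > 0, ∀ y ∈ Metric.ball y0 ε, ∀ n : ℕ,
      ‖iteratedFDeriv ℝ n g y‖ ≤ C * R ^ n * n.factorial := by
  obtain ⟨P, r, hf⟩ := hg
  obtain ⟨r1, hr1, hr1r⟩ := ENNReal.lt_iff_exists_nnreal_btwn.1 hf.r_pos
  have hr1' : 0 < r1 := by exact_mod_cast hr1
  set r0 : NNReal := r1 / 2 with hr0
  have hr0pos : 0 < r0 := by rw [hr0]; positivity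
  have hsum : (r0 + r0 : ENNReal) < P.radius := by
    rw [← ENNReal.coe_add, hr0, add_halves]
    exact hr1r.trans_le hf.r_le
  have hS := P.changeOriginSeries_summable_aux₁ hsum
  set S := ∑' s : Σ k l : ℕ, { s : Finset (Fin (k + l)) // s.card = l },
      ‖P (s.1 + s.2.1)‖₊ * r0 ^ s.2.1 * r0 ^ s.1 with hSdef
  have hr0r : (r0 : ENNReal) < P.radius := lt_of_le_of_lt le_self_add hsum
  have hb : ∀ z : E, ‖z‖₊ < r0 → ∀ k, ‖P.changeOrigin z k‖₊ * r0 ^ k ≤ S := by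
    intro z hz k
    have hz' : (‖z‖₊ : ENNReal) < P.radius := lt_trans (by exact_mod_cast hz) hr0r
    have h1 := P.nnnorm_changeOrigin_le k hz'
    have hs1 := (NNReal.summable_sigma.1 hS)
    have h2 : ∑' s : Σ l : ℕ, { s : Finset (Fin (k + l)) // s.card = l },
        ‖P (k + s.1)‖₊ * ‖z‖₊ ^ s.1 ≤ ∑' s : Σ l : ℕ, { s : Finset (Fin (k + l)) // s.card = l },
        ‖P (k + s.1)‖₊ * r0 ^ s.1 := by
      refine Summable.tsum_le_tsum (fun s => ?_) (P.changeOriginSeries_summable_aux₂ hz' k)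
        (P.changeOriginSeries_summable_aux₂ hr0r k)
      gcongr
    calc ‖P.changeOrigin z k‖₊ * r0 ^ k
        ≤ (∑' s : Σ l : ℕ, { s : Finset (Fin (k + l)) // s.card = l },
        ‖P (k + s.1)‖₊ * r0 ^ s.1) * r0 ^ k := by gcongr; exact h1.trans h2
      _ = ∑' s : Σ l : ℕ, { s : Finset (Fin (k + l)) // s.card = l },
        ‖P (k + s.1)‖₊ * r0 ^ s.1 * r0 ^ k := (NNReal.tsum_mul_right _ _).symm
      _ ≤ S := by
        rw [hSdef, hS.tsum_sigma' hs1.1]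
        exact hs1.2.le_tsum k (fun _ _ => zero_le)
  refine ⟨r0, hr0pos, S, S.2, (r0 : ℝ)⁻¹, by positivity, fun y hy n => ?_⟩
  set z := y - y0 with hz
  have hzlt : ‖z‖₊ < r0 := by
    rw [← NNReal.coe_lt_coe, coe_nnnorm, hz, ← dist_eq_norm]; exact hy
  have hzr : (‖z‖₊ : ENNReal) < r := by
    refine lt_trans (b := (r0 : ENNReal)) (by exact_mod_cast hzlt) (lt_of_le_of_lt ?_ hr1r)
    rw [hr0]; exact_mod_cast half_le_self (zero_le)
  have hfz := hf.changeOrigin hzr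
  have hyz : y0 + z = y := by simp [hz]
  rw [hyz] at hfz
  have hbn := hb z hzlt n
  have hbn' : ‖P.changeOrigin z n‖ ≤ S * (r0 : ℝ)⁻¹ ^ n := by
    rw [inv_pow, ← div_eq_mul_inv, le_div_iff₀ (by positivity)]
    exact_mod_cast hbn
  refine ContinuousMultilinearMap.opNorm_le_bound (by positivity) fun w => ?_
  rw [hfz.iteratedFDeriv_eq_sum_of_completeSpace]
  calc ‖∑ σ : Equiv.Perm (Fin n), P.changeOrigin z n fun i => w (σ i)‖
      ≤ ∑ σ : Equiv.Perm (Fin n), ‖P.changeOrigin z n fun i => w (σ i)‖ := norm_sum_le _ _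
    _ ≤ ∑ σ : Equiv.Perm (Fin n), S * (r0 : ℝ)⁻¹ ^ n * ∏ i, ‖w i‖ := by
      refine Finset.sum_le_sum fun σ _ => ?_
      refine ((P.changeOrigin z n).le_opNorm _).trans ?_
      rw [Equiv.prod_comp σ (fun i => ‖w i‖)]
      gcongr
    _ = _ := by
      rw [Finset.sum_const, Finset.card_univ, Fintype.card_perm, Fintype.card_fin, nsmul_eq_mul]
      ring

/-- The recursive sequence. -/
noncomputable def AA (p q : ℕ) (L : ℕ → V →L[ℝ] V) (A₀ : (Fin (p + 1) → ℝ) → V) :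
    ℕ → (Fin (p + 1) → ℝ) → V
  | 0 => A₀
  | k + 1 => fun y => (cc q (k + 1) : ℝ)⁻¹ • DL p (Lk L k) (AA p q L A₀ k) y

variable {p : ℕ} {Ω₀ : Set (Fin (p + 1) → ℝ)}

theorem DL_analytic [CompleteSpace V] {L : ℕ → V →L[ℝ] V} {g : (Fin (p + 1) → ℝ) → V}
    (hg : AnalyticOnNhd ℝ g Ω₀) : AnalyticOnNhd ℝ (DL p L g) Ω₀ := by
  intro y hy
  exact ((PhiL p L).analyticAt _).comp (hg.fderiv y hy)

theorem AA_analytic [CompleteSpace V] {q : ℕ} {L : ℕ → V →L[ℝ] V} {A₀ : (Fin (p + 1) → ℝ) → V}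
    (hA : AnalyticOnNhd ℝ A₀ Ω₀) (k : ℕ) : AnalyticOnNhd ℝ (AA p q L A₀ k) Ω₀ := by
  induction k with
  | zero => exact hA
  | succ k ih => exact fun y hy => analyticAt_const.smul (DL_analytic ih y hy)

theorem AA_bound [CompleteSpace V] {q : ℕ} (hq : 1 ≤ q) {L : ℕ → V →L[ℝ] V}
    {A₀ : (Fin (p + 1) → ℝ) → V} (hA : AnalyticOnNhd ℝ A₀ Ω₀) {y0} (hy0 : y0 ∈ Ω₀) :
    ∃ ε > 0, ∃ C ≥ 0, ∃ R > 0, ∀ y ∈ Metric.ball y0 ε, y ∈ Ω₀ → ∀ k : ℕ,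
      ‖AA p q L A₀ k y‖ ≤ C * R ^ k ∧ ‖fderiv ℝ (AA p q L A₀ k) y‖ ≤ C * (k + 1) * R ^ k := by
  obtain ⟨ε, hε, C, hC, R, hR, hb⟩ := cauchy_bound A₀ y0 (hA y0 hy0)
  obtain ⟨K, hK0, hK⟩ : ∃ K : ℝ, 0 < K ∧ ∀ k, ‖PhiL p (Lk L k)‖ ≤ K := by
    refine ⟨‖PhiL p L‖ + ‖PhiL p (Lb L)‖ + 1, by positivity, fun k => ?_⟩
    unfold Lk; split_ifs
    · linarith [norm_nonneg (PhiL p (Lb L))]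
    · linarith [norm_nonneg (PhiL p L)]
  have main : ∀ k n : ℕ, ∀ y ∈ Metric.ball y0 ε, y ∈ Ω₀ →
      ‖iteratedFDeriv ℝ n (AA p q L A₀ k) y‖
        ≤ C * K ^ k * R ^ (n + k) * (n + k).factorial / k.factorial := by
    intro k
    induction k with
    | zero => intro n y hy hyΩ; simpa [AA] using hb y hy n
    | succ k ih =>
      intro n y hy hyΩ
      have hcc : ((k : ℝ) + 1) ≤ cc q (k + 1) := by exact_mod_cast le_cc q hq (k + 1)
      have han := AA_analytic (q := q) (L := L) hA k
      have e : AA p q L A₀ (k + 1)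
          = ⇑((cc q (k + 1) : ℝ)⁻¹ • PhiL p (Lk L k)) ∘ (fderiv ℝ (AA p q L A₀ k)) := by
        funext y; simp [AA, DL]
      have hcd : ContDiffAt ℝ n (fderiv ℝ (AA p q L A₀ k)) y := (han.fderiv y hyΩ).contDiffAt
      rw [e]
      calc _ ≤ ‖(cc q (k + 1) : ℝ)⁻¹ • PhiL p (Lk L k)‖
              * ‖iteratedFDeriv ℝ n (fderiv ℝ (AA p q L A₀ k)) y‖ :=
            ContinuousLinearMap.norm_iteratedFDeriv_comp_left _ hcd le_rfl
        _ ≤ (((k : ℝ) + 1)⁻¹ * K) *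
              (C * K ^ k * R ^ (n + 1 + k) * (n + 1 + k).factorial / k.factorial) := by
            rw [norm_iteratedFDeriv_fderiv]
            have h1 : ‖(cc q (k + 1) : ℝ)⁻¹ • PhiL p (Lk L k)‖ ≤ ((k : ℝ) + 1)⁻¹ * K := by
              refine (ContinuousLinearMap.opNorm_smul_le _ _).trans ?_
              rw [norm_inv, Real.norm_natCast]
              have := hK k
              gcongr
            have h2 := ih (n + 1) y hy hyΩ
            gcongr
        _ = _ := by
            rw [show n + 1 + k = n + (k + 1) by ring, Nat.factorial_succ k, pow_succ K]
            push_cast; field_simp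
  refine ⟨ε, hε, C * (1 + R), by positivity, K * R, by positivity, fun y hy hyΩ k => ⟨?_, ?_⟩⟩
  · have := main k 0 y hy hyΩ
    rw [norm_iteratedFDeriv_zero] at this
    refine this.trans ?_
    have : C * K ^ k * R ^ (0 + k) * (0 + k).factorial / k.factorial = C * (K * R) ^ k := by
      rw [zero_add, mul_pow]; field_simp
    rw [this]
    gcongr
    nlinarith
  · have := main k 1 y hy hyΩ
    rw [norm_iteratedFDeriv_one] at this
    refine this.trans ?_
    have : C * K ^ k * R ^ (1 + k) * (1 + k).factorial / k.factorial
        = C * R * (k + 1) * (K * R) ^ k := by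
      rw [add_comm 1 k, Nat.factorial_succ, mul_pow, pow_succ]; push_cast; field_simp
    rw [this]
    gcongr
    linarith

/-- `Lb L` composed with `L` gives the Laplacian -/
theorem DL_DL (L L' : ℕ → V →L[ℝ] V) [CompleteSpace V]
    (h : ∀ s t : Fin (p + 1), L' s * L t + L' t * L s = if s = t then (2 : ℝ) • 1 else 0)
    {g : (Fin (p + 1) → ℝ) → V} {y} (hg : AnalyticAt ℝ g y) :
    DL p L' (DL p L g) y = lapP p g y := by
  set B := fderiv ℝ (fderiv ℝ g) y with hB
  have hdiff : DifferentiableAt ℝ (fderiv ℝ g) y := hg.fderiv.differentiableAt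
  have hsymm : ∀ a b, B a b = B b a := by
    intro a b
    have := (hg.contDiffAt (n := 2)).isSymmSndFDerivAt (by simp)
    exact this a b
  have e1 : ∀ h, fderiv ℝ (DL p L g) y h = PhiL p L (B h) := by
    intro h
    have : HasFDerivAt (DL p L g) ((PhiL p L).comp B) y :=
      (PhiL p L).hasFDerivAt.comp y hdiff.hasFDerivAt
    rw [this.fderiv]; rfl
  have e2 : ∀ s : Fin (p + 1), pdP p s (pdP p s g) y = B (Pi.single s 1) (Pi.single s 1) := by
    intro s
    unfold pdP
    have := hdiff.hasFDerivAt.clm_apply (hasFDerivAt_const (Pi.single s (1 : ℝ) : Fin (p + 1) → ℝ) y)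
    rw [this.fderiv]
    simp [hB]
  have e3 : DL p L' (DL p L g) y = ∑ s : Fin (p + 1), L' s (PhiL p L (B (Pi.single s 1))) := by
    conv_lhs => rw [DL, PhiL_apply]
    simp only [e1]
  rw [e3]
  unfold lapP
  simp only [e2, PhiL_apply, map_sum]
  have h2 : (2 : ℝ) • (∑ s : Fin (p + 1), ∑ t : Fin (p + 1),
        L' s (L t (B (Pi.single s 1) (Pi.single t 1))))
      = (2 : ℝ) • ∑ s : Fin (p + 1), B (Pi.single s 1) (Pi.single s 1) := by
    rw [two_smul]
    conv_lhs => enter [2]; rw [Finset.sum_comm]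
    rw [← Finset.sum_add_distrib, Finset.smul_sum]
    refine Finset.sum_congr rfl fun s _ => ?_
    rw [← Finset.sum_add_distrib, Finset.sum_eq_single s]
    · have := congrArg (fun T : V →L[ℝ] V => T (B (Pi.single s 1) (Pi.single s 1))) (h s s)
      simpa using this
    · intro t _ hts
      have := congrArg (fun T : V →L[ℝ] V => T (B (Pi.single s 1) (Pi.single t 1))) (h s t)
      rw [hsymm (Pi.single t 1) (Pi.single s 1)]
      simpa [hts.symm] using this
    · simp
  exact smul_right_injective _ (two_ne_zero (α := ℝ)) h2

theorem Cl.Lb_rel {m : ℕ} {L : ℕ → V →L[ℝ] V} (h : Cl L m) (hp : p ≤ m) (k : ℕ)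
    (s t : Fin (p + 1)) :
    Lk L (k + 1) s * Lk L k t + Lk L (k + 1) t * Lk L k s
      = if s = t then (2 : ℝ) • 1 else 0 := by
  have key : ∀ s t : ℕ, s ≤ p → t ≤ p → Lb L s * L t + Lb L t * L s
      = (if s = t then (2 : ℝ) • 1 else 0) ∧ L s * Lb L t + L t * Lb L s
      = (if s = t then (2 : ℝ) • 1 else 0) := by
    intro s t hs ht
    rcases Nat.eq_zero_or_pos s with rfl | hs0 <;> rcases Nat.eq_zero_or_pos t with rfl | ht0
    · simp [Lb, h.zero, two_smul, one_add_one_eq_two]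
    · have : t ≠ 0 := by omega
      simp [Lb, h.zero, this, this.symm]
    · have : s ≠ 0 := by omega
      simp [Lb, h.zero, this]
    · have h1 : t ≠ 0 := by omega
      have h2 : s ≠ 0 := by omega
      by_cases hst : s = t
      · subst hst
        have := h.sq s hs0 (by omega)
        simp [Lb, h1, this, two_smul]
      · have := h.anti s t hs0 (by omega) ht0 (by omega) hst
        simp [Lb, h1, h2, this, hst]
  have hst : (s = t) ↔ ((s : ℕ) = t) := Fin.ext_iff
  rw [Lk_succ]
  unfold Lk
  split_ifs with h1 h2 h2
  · simpa [hst.1 h2] using (key s t (by omega) (by omega)).1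
  · have := (key s t (by omega) (by omega)).1
    rwa [if_neg (fun h => h2 (hst.2 h))] at this
  · rw [Lb_Lb]; have := (key s t (by omega) (by omega)).2
    rwa [if_pos (hst.1 h2)] at this
  · rw [Lb_Lb]; have := (key s t (by omega) (by omega)).2
    rwa [if_neg (fun h => h2 (hst.2 h))] at this

theorem DL_congr {L : ℕ → V →L[ℝ] V} {g g' : (Fin (p + 1) → ℝ) → V} (hΩ : IsOpen Ω₀)
    (h : Set.EqOn g g' Ω₀) : Set.EqOn (DL p L g) (DL p L g') Ω₀ := by
  intro y hy
  unfold DL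
  rw [(h.eventuallyEq_of_mem (hΩ.mem_nhds hy)).fderiv_eq]

theorem lapP_congr {g g' : (Fin (p + 1) → ℝ) → V} (hΩ : IsOpen Ω₀)
    (h : Set.EqOn g g' Ω₀) : Set.EqOn (lapP p g) (lapP p g') Ω₀ := by
  intro y hy
  unfold lapP
  refine Finset.sum_congr rfl fun s _ => ?_
  have h1 : Set.EqOn (pdP p s g) (pdP p s g') Ω₀ := by
    intro z hz
    unfold pdP
    rw [(h.eventuallyEq_of_mem (hΩ.mem_nhds hz)).fderiv_eq]
  have h2 := (h1.eventuallyEq_of_mem (hΩ.mem_nhds hy)).fderiv_eq (𝕜 := ℝ)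
  show fderiv ℝ (pdP p s g) y _ = fderiv ℝ (pdP p s g') y _
  rw [h2]

theorem fd_smul (c : ℝ) (g : (Fin (p + 1) → ℝ) → V) (y) :
    fderiv ℝ (fun y => c • g y) y = c • fderiv ℝ g y := by
  by_cases hc : c = 0
  · subst hc; simp
  · haveI := invertibleOfNonzero hc
    exact fderiv_const_smul_of_invertible c

theorem DL_smul (L : ℕ → V →L[ℝ] V) (c : ℝ) (g : (Fin (p + 1) → ℝ) → V) :
    DL p L (fun y => c • g y) = fun y => c • DL p L g y := by
  funext y
  unfold DL
  rw [fd_smul, map_smul]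

theorem lapP_smul (c : ℝ) (g : (Fin (p + 1) → ℝ) → V) :
    lapP p (fun y => c • g y) = fun y => c • lapP p g y := by
  have : ∀ s (g : (Fin (p + 1) → ℝ) → V), pdP p s (fun y => c • g y) = fun y => c • pdP p s g y := by
    intro s g
    funext y
    unfold pdP
    rw [fd_smul]; rfl
  funext y
  unfold lapP
  simp only [this, Finset.smul_sum]

theorem lapIterP_succ (k : ℕ) (g : (Fin (p + 1) → ℝ) → V) :
    lapIterP p (k + 1) g = lapP p (lapIterP p k g) := by
  unfold lapIterP
  rw [Function.iterate_succ_apply']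

theorem AA_step [CompleteSpace V] {m q : ℕ} {L : ℕ → V →L[ℝ] V} (h : Cl L m) (hp : p ≤ m)
    {A₀ : (Fin (p + 1) → ℝ) → V} (hA : AnalyticOnNhd ℝ A₀ Ω₀) (k : ℕ) :
    ∀ y ∈ Ω₀, AA p q L A₀ (k + 2) y
      = ((cc q (k + 2) : ℝ)⁻¹ * (cc q (k + 1) : ℝ)⁻¹) • lapP p (AA p q L A₀ k) y := by
  intro y hy
  rw [← DL_DL (Lk L k) (Lk L (k + 1)) (h.Lb_rel hp k) (AA_analytic hA k y hy)]
  simp only [AA, DL_smul, smul_smul]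

theorem AA_even [CompleteSpace V] {m q : ℕ} (hq : 1 ≤ q) {L : ℕ → V →L[ℝ] V} (h : Cl L m) (hp : p ≤ m)
    (hΩ : IsOpen Ω₀)
    {A₀ : (Fin (p + 1) → ℝ) → V} (hA : AnalyticOnNhd ℝ A₀ Ω₀) (k : ℕ) :
    ∀ y ∈ Ω₀, AA p q L A₀ (2 * k) y
      = (Real.Gamma ((q : ℝ) / 2) / (2 ^ (2 * k) * (k.factorial : ℝ) *
                Real.Gamma ((k : ℝ) + (q : ℝ) / 2))) • lapIterP p k A₀ y := by
  have hq' : (0 : ℝ) < q := by exact_mod_cast hq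
  induction k with
  | zero =>
    intro y hy
    have : Real.Gamma ((q : ℝ) / 2) ≠ 0 := (Real.Gamma_pos_of_pos (by positivity)).ne'
    simp [AA, lapIterP, this]
  | succ k ih =>
    intro y hy
    rw [show 2 * (k + 1) = 2 * k + 2 by ring, AA_step h hp hA (2 * k) y hy, lapP_congr hΩ ih hy,
      lapP_smul, lapIterP_succ]
    simp only [smul_smul]
    congr 1
    have e1 : cc q (2 * k + 2) = 2 * k + 2 := by rw [cc, cc_even]
    rw [e1, cc_odd, Nat.factorial_succ, pow_add]
    have e2 : Real.Gamma (((k + 1 : ℕ) : ℝ) + (q : ℝ) / 2)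
        = ((k : ℝ) + q / 2) * Real.Gamma ((k : ℝ) + (q : ℝ) / 2) := by
      rw [← Real.Gamma_add_one (by positivity)]; push_cast; ring_nf
    have hG : Real.Gamma ((k : ℝ) + (q : ℝ) / 2) ≠ 0 := (Real.Gamma_pos_of_pos (by positivity)).ne'
    rw [e2]
    push_cast
    have : (2 * (k : ℝ) + q) ≠ 0 := by positivity
    have : ((k : ℝ) + q / 2) ≠ 0 := by positivity
    field_simp
    try ring

theorem AA_odd [CompleteSpace V] {m q : ℕ} (hq : 1 ≤ q) {L : ℕ → V →L[ℝ] V} (h : Cl L m) (hp : p ≤ m)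
    (hΩ : IsOpen Ω₀)
    {A₀ : (Fin (p + 1) → ℝ) → V} (hA : AnalyticOnNhd ℝ A₀ Ω₀) (k : ℕ) :
    ∀ y ∈ Ω₀, AA p q L A₀ (2 * k + 1) y
      = (Real.Gamma ((q : ℝ) / 2) / (2 ^ (2 * k + 1) * (k.factorial : ℝ) *
                Real.Gamma ((k : ℝ) + (q : ℝ) / 2 + 1))) • lapIterP p k (DL p L A₀) y := by
  have hq' : (0 : ℝ) < q := by exact_mod_cast hq
  induction k with
  | zero =>
    intro y hy
    have : Real.Gamma ((q : ℝ) / 2) ≠ 0 := (Real.Gamma_pos_of_pos (by positivity)).ne'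
    have e2 : Real.Gamma ((q : ℝ) / 2 + 1) = q / 2 * Real.Gamma ((q : ℝ) / 2) := by
      rw [← Real.Gamma_add_one (by positivity)]
    have e3 : ((0 : ℕ) : ℝ) + (q : ℝ) / 2 + 1 = (q : ℝ) / 2 + 1 := by simp
    rw [e3, e2]
    simp only [AA, lapIterP, cc, Lk]
    simp only [mul_zero, zero_add, Function.iterate_zero, id, AA, Even.zero, if_true, cc]
    congr 1
    simp only [Nat.factorial_zero]
    push_cast
    field_simp
  | succ k ih =>
    intro y hy
    rw [show 2 * (k + 1) + 1 = 2 * k + 1 + 2 by ring, AA_step h hp hA (2 * k + 1) y hy,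
      lapP_congr hΩ ih hy,
      lapP_smul, lapIterP_succ]
    simp only [smul_smul]
    congr 1
    have e1 : cc q (2 * k + 1 + 2) = 2 * k + q + 2 := by rw [cc, cc_odd]
    have e1' : cc q (2 * k + 1 + 1) = 2 * k + 2 := by rw [cc, cc_even]
    rw [e1, e1', Nat.factorial_succ, pow_add _ (2 * k + 1)]
    have e2 : Real.Gamma (((k + 1 : ℕ) : ℝ) + (q : ℝ) / 2 + 1)
        = ((k : ℝ) + q / 2 + 1) * Real.Gamma ((k : ℝ) + (q : ℝ) / 2 + 1) := by
      rw [← Real.Gamma_add_one (by positivity)]; push_cast; ring_nf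
    have hG : Real.Gamma ((k : ℝ) + (q : ℝ) / 2 + 1) ≠ 0 :=
      (Real.Gamma_pos_of_pos (by positivity)).ne'
    rw [e2]
    push_cast
    have : (2 * (k : ℝ) + q + 2) ≠ 0 := by positivity
    have : ((k : ℝ) + q / 2 + 1) ≠ 0 := by positivity
    field_simp
    try ring

end CauchyPart

section TermwisePart

variable {V : Type*} [NormedAddCommGroup V] [NormedSpace ℝ V] {m p : ℕ}

/-- `projP` as a continuous linear map -/
noncomputable def Pc (m p : ℕ) : (Fin (m + 1) → ℝ) →L[ℝ] (Fin (p + 1) → ℝ) :=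
  ContinuousLinearMap.pi fun s : Fin (p + 1) => if h : (s : ℕ) < m + 1 then
    ContinuousLinearMap.proj (R := ℝ) (φ := fun _ : Fin (m + 1) => ℝ) ⟨(s : ℕ), h⟩ else 0

theorem Pc_apply (x : Fin (m + 1) → ℝ) : Pc m p x = projP m p x := by
  funext s
  simp only [Pc, ContinuousLinearMap.pi_apply, projP]
  split_ifs <;> simp

theorem Pc_single_gt (s : Fin (m + 1)) (hs : p < (s : ℕ)) : Pc m p (Pi.single s 1) = 0 := by
  rw [Pc_apply]
  funext t
  simp only [projP]
  split_ifs with h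
  · have : (⟨(t : ℕ), h⟩ : Fin (m + 1)) ≠ s := by
      intro e; have := congrArg Fin.val e; simp at this; omega
    simp [this]
  · rfl

theorem Pc_single_le (hp : p ≤ m) (s : Fin (p + 1)) :
    Pc m p (Pi.single (⟨(s : ℕ), by omega⟩ : Fin (m + 1)) 1) = Pi.single s 1 := by
  rw [Pc_apply]
  funext t
  have h : (t : ℕ) < m + 1 := by omega
  simp only [projP, h, dif_pos]
  by_cases hts : t = s
  · subst hts; simp
  · have : (⟨(t : ℕ), h⟩ : Fin (m + 1)) ≠ ⟨(s : ℕ), by omega⟩ := by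
      intro e; simp only [Fin.mk.injEq] at e; exact hts (Fin.ext e)
    simp [this, hts]

theorem sum_le_eq (hp : p ≤ m) (F : ℕ → V) :
    (∑ s : Fin (m + 1), if (s : ℕ) ≤ p then F s else 0) = ∑ s : Fin (p + 1), F s := by
  rw [Fin.sum_univ_eq_sum_range (fun s => if s ≤ p then F s else 0) (m + 1),
    Fin.sum_univ_eq_sum_range F (p + 1), ← Finset.sum_filter]
  refine Finset.sum_congr ?_ fun _ _ => rfl
  ext t; simp; omega

/-- terms of the series -/
noncomputable def uu (L : ℕ → V →L[ℝ] V) (m p : ℕ) (a : ℕ → (Fin (p + 1) → ℝ) → V) (k : ℕ)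
    (x : Fin (m + 1) → ℝ) : V := (Mx L m p x ^ k) (a k (Pc m p x))

theorem Mx_pow_hasFDerivAt (L : ℕ → V →L[ℝ] V) (x : Fin (m + 1) → ℝ) (k : ℕ) :
    ∃ T : (Fin (m + 1) → ℝ) →L[ℝ] (V →L[ℝ] V),
      HasFDerivAt (fun x => Mx L m p x ^ k) T x ∧
      ∀ h, T h = dpow (Mx L m p x) (Mx L m p h) k := by
  induction k with
  | zero => exact ⟨0, by simpa using hasFDerivAt_const _ _, by simp [dpow]⟩
  | succ k ih =>
    obtain ⟨T, hT, hT'⟩ := ih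
    have h1 := HasFDerivAt.mul' (Mx L m p).hasFDerivAt hT
    have e : (fun x => Mx L m p x ^ (k + 1)) = (⇑(Mx L m p) * fun x => Mx L m p x ^ k) := by
      funext y; exact pow_succ' _ _
    refine ⟨_, by rw [e]; exact h1, fun h => ?_⟩
    simp [dpow, hT']
    rw [add_comm]

theorem uu_hasFDerivAt (L : ℕ → V →L[ℝ] V) (a : ℕ → (Fin (p + 1) → ℝ) → V)
    (x : Fin (m + 1) → ℝ) (k : ℕ) (ha : DifferentiableAt ℝ (a k) (Pc m p x)) :
    DifferentiableAt ℝ (uu L m p a k) x ∧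
    ∀ h, fderiv ℝ (uu L m p a k) x h = dpow (Mx L m p x) (Mx L m p h) k (a k (Pc m p x))
      + (Mx L m p x ^ k) (fderiv ℝ (a k) (Pc m p x) (Pc m p h)) := by
  obtain ⟨T, hT, hT'⟩ := Mx_pow_hasFDerivAt (p := p) L x k
  have h1 : HasFDerivAt (fun x => a k (Pc m p x)) ((fderiv ℝ (a k) (Pc m p x)).comp (Pc m p)) x :=
    ha.hasFDerivAt.comp x (Pc m p).hasFDerivAt
  have h2 := hT.clm_apply h1
  refine ⟨h2.differentiableAt, fun h => ?_⟩
  have : fderiv ℝ (uu L m p a k) x = _ := h2.fderiv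
  rw [this]
  simp [hT', add_comm]

theorem norm_pow_clm_le (M : V →L[ℝ] V) {η : ℝ} (hη : 0 ≤ η) (hM : ‖M‖ ≤ η) (k : ℕ) :
    ‖M ^ k‖ ≤ η ^ k := by
  rcases subsingleton_or_nontrivial V with hV | hV
  · rw [Subsingleton.elim (M ^ k) 0, norm_zero]; positivity
  · exact (norm_pow_le M k).trans (by gcongr)

/-- the domain for termwise differentiation -/
def SS (L : ℕ → V →L[ℝ] V) (m p : ℕ) (y0 : Fin (p + 1) → ℝ) (ε η : ℝ) : Set (Fin (m + 1) → ℝ) :=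
  {x | Pc m p x ∈ Metric.ball y0 ε ∧ ‖Mx L m p x‖ < η}

theorem SS_open (L : ℕ → V →L[ℝ] V) (y0 : Fin (p + 1) → ℝ) (ε η : ℝ) :
    IsOpen (SS L m p y0 ε η) :=
  (Metric.isOpen_ball.preimage (Pc m p).continuous).inter
    (isOpen_lt (Mx L m p).continuous.norm continuous_const)

theorem SS_convex (L : ℕ → V →L[ℝ] V) (y0 : Fin (p + 1) → ℝ) (ε η : ℝ) :
    Convex ℝ (SS L m p y0 ε η) := by
  have h1 : Convex ℝ (Pc m p ⁻¹' Metric.ball y0 ε) :=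
    (convex_ball y0 ε).linear_preimage (Pc m p).toLinearMap
  have h2 : Convex ℝ (Mx L m p ⁻¹' Metric.ball 0 η) :=
    (convex_ball 0 η).linear_preimage (Mx L m p).toLinearMap
  have := h1.inter h2
  convert this using 1
  ext x; simp [SS]

/-- hypothesis for termwise differentiation -/
structure TH (a : ℕ → (Fin (p + 1) → ℝ) → V) (y0 : Fin (p + 1) → ℝ) (ε η C R : ℝ) : Prop where
  eta : 0 < η
  C0 : 0 ≤ C
  R0 : 0 < R
  etaR : η * R < 1
  diff : ∀ k, ContDiffOn ℝ 1 (a k) (Metric.ball y0 ε)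
  b0 : ∀ k, ∀ y ∈ Metric.ball y0 ε, ‖a k y‖ ≤ C * R ^ k
  b1 : ∀ k, ∀ y ∈ Metric.ball y0 ε, ‖fderiv ℝ (a k) y‖ ≤ C * (k + 1) * R ^ k

variable {a : ℕ → (Fin (p + 1) → ℝ) → V} {y0 : Fin (p + 1) → ℝ} {ε η C R : ℝ}

theorem TH.bound0 (h : TH a y0 ε η C R) (L : ℕ → V →L[ℝ] V) {x : Fin (m + 1) → ℝ}
    (hx : x ∈ SS L m p y0 ε η) (k : ℕ) : ‖uu L m p a k x‖ ≤ C * (η * R) ^ k := by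
  have h1 := norm_pow_clm_le _ h.eta.le hx.2.le k
  have h2 := h.b0 k _ hx.1
  have := h.C0
  have := h.R0
  have := h.eta
  calc ‖uu L m p a k x‖ ≤ ‖Mx L m p x ^ k‖ * ‖a k (Pc m p x)‖ := ContinuousLinearMap.le_opNorm _ _
    _ ≤ η ^ k * (C * R ^ k) := by gcongr
    _ = _ := by rw [mul_pow]; ring

theorem TH.bound1 (h : TH a y0 ε η C R) (L : ℕ → V →L[ℝ] V) {x : Fin (m + 1) → ℝ}
    (hx : x ∈ SS L m p y0 ε η) (k : ℕ) : ‖fderiv ℝ (uu L m p a k) x‖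
      ≤ C * (‖Mx L m p‖ / η + ‖Pc m p‖) * ((k + 1) * (η * R) ^ k) := by
  have h1 := norm_pow_clm_le _ h.eta.le hx.2.le k
  have h2 := h.b0 k _ hx.1
  have h3 := h.b1 k _ hx.1
  have hC := h.C0
  have hR := h.R0
  have hη := h.eta
  have hd : DifferentiableAt ℝ (a k) (Pc m p x) :=
    ((h.diff k).contDiffAt (Metric.isOpen_ball.mem_nhds hx.1)).differentiableAt (by simp)
  refine ContinuousLinearMap.opNorm_le_bound _ (by positivity) fun y => ?_
  rw [(uu_hasFDerivAt L a x k hd).2]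
  have h4 := norm_dpow_le (Mx L m p x) (Mx L m p y) η hη hx.2.le k
  calc _ ≤ ‖dpow (Mx L m p x) (Mx L m p y) k‖ * ‖a k (Pc m p x)‖
        + ‖Mx L m p x ^ k‖ * (‖fderiv ℝ (a k) (Pc m p x)‖ * ‖Pc m p y‖) := by
        refine (norm_add_le _ _).trans (add_le_add (ContinuousLinearMap.le_opNorm _ _) ?_)
        refine (ContinuousLinearMap.le_opNorm _ _).trans ?_
        gcongr
        exact ContinuousLinearMap.le_opNorm _ _
    _ ≤ (k * η ^ k / η * (‖Mx L m p‖ * ‖y‖)) * (C * R ^ k)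
        + η ^ k * ((C * (k + 1) * R ^ k) * (‖Pc m p‖ * ‖y‖)) := by
        gcongr
        · refine h4.trans ?_
          gcongr
          exact ContinuousLinearMap.le_opNorm _ _
        · exact ContinuousLinearMap.le_opNorm _ _
    _ ≤ ((k + 1) * η ^ k / η * (‖Mx L m p‖ * ‖y‖)) * (C * R ^ k)
        + η ^ k * ((C * (k + 1) * R ^ k) * (‖Pc m p‖ * ‖y‖)) := by
        gcongr; linarith
    _ = _ := by rw [mul_pow]; field_simp

theorem summable_geo1 {t : ℝ} (h0 : 0 ≤ t) (h1 : t < 1) :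
    Summable fun k : ℕ => ((k : ℝ) + 1) * t ^ k := by
  have e1 := summable_pow_mul_geometric_of_norm_lt_one 1 (r := t)
    (by rwa [Real.norm_of_nonneg h0])
  have e2 := summable_geometric_of_lt_one h0 h1
  refine (e1.add e2).congr fun k => ?_
  simp; ring

theorem TH.summable [CompleteSpace V] (h : TH a y0 ε η C R) (L : ℕ → V →L[ℝ] V)
    {x : Fin (m + 1) → ℝ}
    (hx : x ∈ SS L m p y0 ε η) : Summable fun k => uu L m p a k x := by
  refine Summable.of_norm_bounded (g := fun k => C * (η * R) ^ k) ?_ (h.bound0 L hx)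
  exact (summable_geometric_of_lt_one (mul_pos h.eta h.R0).le h.etaR).mul_left C

theorem TH.bsummable (h : TH a y0 ε η C R) (K : ℝ) :
    Summable fun k : ℕ => K * (((k : ℝ) + 1) * (η * R) ^ k) :=
  (summable_geo1 (mul_pos h.eta h.R0).le h.etaR).mul_left _

theorem TH.fsummable [CompleteSpace V] (h : TH a y0 ε η C R) (L : ℕ → V →L[ℝ] V)
    {x : Fin (m + 1) → ℝ}
    (hx : x ∈ SS L m p y0 ε η) : Summable fun k => fderiv ℝ (uu L m p a k) x :=
  Summable.of_norm_bounded (h.bsummable _) (h.bound1 L hx)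

theorem TH.udiff (h : TH a y0 ε η C R) (L : ℕ → V →L[ℝ] V) (k : ℕ)
    {x : Fin (m + 1) → ℝ}
    (hx : x ∈ SS L m p y0 ε η) : DifferentiableAt ℝ (uu L m p a k) x :=
  (uu_hasFDerivAt L a x k (((h.diff k).contDiffAt
    (Metric.isOpen_ball.mem_nhds hx.1)).differentiableAt (by simp))).1

theorem TH.hasFDerivAt [CompleteSpace V] (h : TH a y0 ε η C R) (L : ℕ → V →L[ℝ] V)
    {x : Fin (m + 1) → ℝ}
    (hx : x ∈ SS L m p y0 ε η) : HasFDerivAt (fun x => ∑' k, uu L m p a k x)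
      (∑' k, fderiv ℝ (uu L m p a k) x) x :=
  hasFDerivAt_tsum_of_isPreconnected (h.bsummable _) (SS_open L y0 ε η)
    (SS_convex L y0 ε η).isPreconnected
    (fun k x hx => (h.udiff L k hx).hasFDerivAt) (fun k x hx => h.bound1 L hx k) hx
    (h.summable L hx) hx

theorem TH.contDiffOn [CompleteSpace V] (h : TH a y0 ε η C R) (L : ℕ → V →L[ℝ] V) :
    ContDiffOn ℝ 1 (fun x => ∑' k, uu L m p a k x) (SS L m p y0 ε η) := by
  have hop := SS_open (m := m) L y0 ε η
  rw [show (1 : WithTop ℕ∞) = 0 + 1 by simp, contDiffOn_succ_iff_fderiv_of_isOpen hop]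
  refine ⟨fun x hx => (h.hasFDerivAt L hx).differentiableAt.differentiableWithinAt, by simp, ?_⟩
  rw [contDiffOn_zero]
  have : ContinuousOn (fun x => ∑' k, fderiv ℝ (uu L m p a k) x) (SS L m p y0 ε η) := by
    refine continuousOn_tsum (fun k => ?_) (h.bsummable _) (fun k x hx => h.bound1 L hx k)
    have hc : ContDiffOn ℝ 1 (uu L m p a k) (SS L m p y0 ε η) := by
      have e1 : ContDiff ℝ 1 (fun x => Mx L m p x ^ k) := (Mx L m p).contDiff.pow k
      have e2 : ContDiffOn ℝ 1 (fun x => a k (Pc m p x)) (SS L m p y0 ε η) :=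
        (h.diff k).comp (Pc m p).contDiff.contDiffOn fun x hx => hx.1
      exact e1.contDiffOn.clm_apply e2
    exact hc.continuousOn_fderiv_of_isOpen hop le_rfl
  exact this.congr fun x hx => (h.hasFDerivAt L hx).fderiv

theorem DL_uu {L : ℕ → V →L[ℝ] V} (hL : Cl L m) (hp : p < m) 
    (x : Fin (m + 1) → ℝ) (k : ℕ) (ha : DifferentiableAt ℝ (a k) (Pc m p x)) :
    DL m L (uu L m p a k) x = (Mx L m p x ^ k) (DL p (Lk L k) (a k) (Pc m p x))
      - (cc (m - p) k : ℝ) • (Mx L m p x ^ (k - 1)) (a k (Pc m p x)) := by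
  rw [DL, PhiL_apply]
  have key : ∀ s : Fin (m + 1), L s (fderiv ℝ (uu L m p a k) x (Pi.single s 1))
      = (if (s : ℕ) ≤ p then (Mx L m p x ^ k) (Lk L k s
          (fderiv ℝ (a k) (Pc m p x) (if h : (s : ℕ) < p + 1 then Pi.single ⟨s, h⟩ 1 else 0))) else 0)
        + (if p < (s : ℕ) then L s * dpow (Mx L m p x) (L s) k else 0) (a k (Pc m p x)) := by
    intro s
    rw [(uu_hasFDerivAt L a x k ha).2]
    by_cases hs : (s : ℕ) ≤ p
    · have hs' : (s : ℕ) < p + 1 := by omega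
      have e : Pc m p (Pi.single s 1) = Pi.single (⟨s, hs'⟩ : Fin (p + 1)) 1 :=
        Pc_single_le hp.le ⟨s, hs'⟩
      have := congrArg (fun T : V →L[ℝ] V => T
        (fderiv ℝ (a k) (Pc m p x) (Pi.single (⟨s, hs'⟩ : Fin (p + 1)) 1)))
        (hL.mul_pow (p := p) s hs hp.le x k)
      rw [Mx_single_le s hs, dpow_zero_dir, e]
      simpa [hs, hs', not_lt.2 hs] using this
    · have hs' : p < (s : ℕ) := by omega
      rw [Mx_single_gt s hs', Pc_single_gt s hs']
      simp [hs, hs']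
  rw [Finset.sum_congr rfl fun s _ => key s, Finset.sum_add_distrib,
    sum_le_eq hp.le (fun s => (Mx L m p x ^ k) (Lk L k s
          (fderiv ℝ (a k) (Pc m p x) (if h : (s : ℕ) < p + 1 then Pi.single ⟨s, h⟩ 1 else 0)))),
    ← ContinuousLinearMap.sum_apply, hL.sum_dpow hp, DL, PhiL_apply, map_sum, sub_eq_add_neg]
  congr 1
  · refine Finset.sum_congr rfl fun s _ => ?_
    have hs : (s : ℕ) < p + 1 := s.2
    simp only [hs, dif_pos]
  · simp

theorem TH.DL_eq [CompleteSpace V] (h : TH a y0 ε η C R) (L : ℕ → V →L[ℝ] V)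
    {x : Fin (m + 1) → ℝ} (hx : x ∈ SS L m p y0 ε η) :
    HasSum (fun k => DL m L (uu L m p a k) x) (DL m L (fun x => ∑' k, uu L m p a k x) x) := by
  have h1 := (PhiL m L).hasSum (h.fsummable L hx).hasSum
  rw [← (h.hasFDerivAt L hx).fderiv] at h1
  exact h1

end TermwisePart

section ExistPart

variable {V : Type*} [NormedAddCommGroup V] [NormedSpace ℝ V] {m p : ℕ}

theorem DL_AA {q : ℕ} (hq : 1 ≤ q) (L : ℕ → V →L[ℝ] V) (A₀ : (Fin (p + 1) → ℝ) → V) (k : ℕ) (y) :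
    DL p (Lk L k) (AA p q L A₀ k) y = (cc q (k + 1) : ℝ) • AA p q L A₀ (k + 1) y := by
  have : (cc q (k + 1) : ℝ) ≠ 0 := by
    have := le_cc q hq (k + 1)
    have : cc q (k + 1) ≠ 0 := by omega
    exact_mod_cast this
  simp only [AA, smul_smul, mul_inv_cancel₀ this, one_smul]

theorem exist_local [CompleteSpace V] {L : ℕ → V →L[ℝ] V} (hL : Cl L m) (hp : p < m)
    {A₀ : (Fin (p + 1) → ℝ) → V} {y0 : Fin (p + 1) → ℝ} {ε η C R : ℝ}
    (h : TH (AA p (m - p) L A₀) y0 ε η C R) {x : Fin (m + 1) → ℝ} (hx : x ∈ SS L m p y0 ε η) :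
    DL m L (fun x => ∑' k, uu L m p (AA p (m - p) L A₀) k x) x = 0 := by
  have hs := h.DL_eq L hx
  set q := m - p with hq
  have hq1 : 1 ≤ q := by omega
  set T : ℕ → V := fun k => (cc q (k + 1) : ℝ) • (Mx L m p x ^ k) (AA p q L A₀ (k + 1) (Pc m p x))
    with hT
  have hterm : ∀ k, DL m L (uu L m p (AA p q L A₀) k) x
      = T k - (cc q k : ℝ) • (Mx L m p x ^ (k - 1)) (AA p q L A₀ k (Pc m p x)) := by
    intro k
    rw [DL_uu hL hp x k (((h.diff k).contDiffAt
      (Metric.isOpen_ball.mem_nhds hx.1)).differentiableAt (by simp)), DL_AA hq1, map_smul]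
  have hpart : ∀ n, ∑ k ∈ Finset.range (n + 1), DL m L (uu L m p (AA p q L A₀) k) x = T n := by
    intro n
    induction n with
    | zero => simp [hterm, cc]
    | succ n ih => rw [Finset.sum_range_succ, ih, hterm]; simp [hT]
  have ht : Tendsto T atTop (𝓝 (DL m L (fun x => ∑' k, uu L m p (AA p q L A₀) k x) x)) := by
    have := (tendsto_add_atTop_iff_nat 1).2 hs.tendsto_sum_nat
    exact this.congr hpart
  have h0 : Tendsto T atTop (𝓝 0) := by
    refine squeeze_zero_norm (fun k => ?_) (h.bsummable ((1 + q) * C * R)).tendsto_atTop_zero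
    have h1 := norm_pow_clm_le _ h.eta.le hx.2.le k
    have h2 := h.b0 (k + 1) _ hx.1
    have hC := h.C0
    have hR := h.R0
    have hη := h.eta
    have h3 : (cc q (k + 1) : ℝ) ≤ (1 + q) * (k + 1) := by
      have : cc q (k + 1) ≤ (1 + q) * (k + 1) := (cc_le q (k + 1)).trans (by nlinarith)
      exact_mod_cast this
    calc ‖T k‖ ≤ (cc q (k + 1) : ℝ) * (‖Mx L m p x ^ k‖ * ‖AA p q L A₀ (k + 1) (Pc m p x)‖) := by
          rw [hT, norm_smul, Real.norm_of_nonneg (by positivity)]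
          gcongr
          exact ContinuousLinearMap.le_opNorm _ _
      _ ≤ ((1 + q) * (k + 1)) * (η ^ k * (C * R ^ (k + 1))) := by gcongr
      _ = _ := by rw [_root_.mul_pow, pow_succ]; ring
  exact tendsto_nhds_unique ht h0

theorem rsq_nonneg (x : Fin (m + 1) → ℝ) : 0 ≤ rsq m p x :=
  Finset.sum_nonneg fun s _ => by split_ifs <;> positivity

theorem rad_cont : Continuous (rad m p) := by
  have : rad m p = fun x => Real.sqrt (rsq m p x) := funext (rad_eq m p)
  rw [this]
  refine Real.continuous_sqrt.comp (continuous_finset_sum _ fun s _ => ?_)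
  by_cases h : p < (s : ℕ)
  · simp only [h, if_true]; fun_prop
  · simp only [h, if_false]; fun_prop

theorem rsq_add (z w : Fin (m + 1) → ℝ) (r : ℝ) (hz : ∀ s : Fin (m + 1), p < (s : ℕ) → z s = 0) :
    rsq m p (z + r • w) = r ^ 2 * rsq m p w := by
  unfold rsq
  rw [Finset.mul_sum]
  refine Finset.sum_congr rfl fun s _ => ?_
  split_ifs with h
  · simp [hz s h, mul_pow]
  · simp

theorem rad_add (z w : Fin (m + 1) → ℝ) (r : ℝ) (hz : ∀ s : Fin (m + 1), p < (s : ℕ) → z s = 0) :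
    rad m p (z + r • w) = |r| * rad m p w := by
  rw [rad_eq, rad_eq, rsq_add z w r hz, Real.sqrt_mul (sq_nonneg r), Real.sqrt_sq_eq_abs]

theorem injP_gt (y : Fin (p + 1) → ℝ) (s : Fin (m + 1)) (hs : p < (s : ℕ)) : injP m p y s = 0 := by
  have : ¬ ((s : ℕ) < p + 1) := by omega
  simp [injP, this]

theorem xppart_gt (x : Fin (m + 1) → ℝ) (s : Fin (m + 1)) (hs : p < (s : ℕ)) :
    xppart m p x s = 0 := by
  simp [xppart, not_le.2 hs]

theorem Pc_injP (hp : p ≤ m) (y : Fin (p + 1) → ℝ) : Pc m p (injP m p y) = y := by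
  rw [Pc_apply]; funext s
  have : (s : ℕ) < m + 1 := by omega
  simp [projP, injP, this]
  omega

theorem Pc_zero (w : Fin (m + 1) → ℝ) (hw : ∀ s : Fin (m + 1), (s : ℕ) ≤ p → w s = 0) :
    Pc m p w = 0 := by
  rw [Pc_apply]; funext s
  simp only [projP]
  split_ifs with h
  · exact hw _ (by simp; omega)
  · rfl

theorem Pc_xppart (x : Fin (m + 1) → ℝ) : Pc m p (xppart m p x) = Pc m p x := by
  rw [Pc_apply, Pc_apply]; funext s
  simp only [projP, xppart]
  split_ifs with h h2
  · rfl
  · simp at h2; omega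
  · rfl

theorem injP_Pc (hp : p ≤ m) (x : Fin (m + 1) → ℝ) : injP m p (Pc m p x) = xppart m p x := by
  rw [Pc_apply]; funext s
  simp only [projP, xppart, injP]
  by_cases h : (s : ℕ) ≤ p
  · have h' : (s : ℕ) < p + 1 := by omega
    simp [h, h']
    omega
  · have h' : ¬ (s : ℕ) < p + 1 := by omega
    simp [h, h']

theorem injP_cont : Continuous (injP m p) := by
  refine continuous_pi fun s => ?_
  simp only [injP]
  split_ifs <;> fun_prop

theorem rad_sub (x : Fin (m + 1) → ℝ) : rad m p (x - xppart m p x) = rad m p x := by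
  unfold rad
  congr 1
  refine Finset.sum_congr rfl fun s _ => ?_
  simp only [xqpart, xppart, Pi.sub_apply]
  split_ifs <;> simp

theorem le_rad (x : Fin (m + 1) → ℝ) (s : Fin (m + 1)) (hs : p < (s : ℕ)) : |x s| ≤ rad m p x := by
  rw [rad_eq]
  refine Real.abs_le_sqrt ?_
  have := Finset.single_le_sum (f := fun s : Fin (m + 1) => if p < (s : ℕ) then x s ^ 2 else 0)
    (fun t _ => by split_ifs <;> positivity) (Finset.mem_univ s)
  rw [if_pos hs] at this
  exact this

theorem Mx_norm_le (L : ℕ → V →L[ℝ] V) (x : Fin (m + 1) → ℝ) :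
    ‖Mx L m p x‖ ≤ (∑ s : Fin (m + 1), ‖L s‖) * rad m p x := by
  rw [Mx_apply, Finset.sum_mul]
  refine (norm_sum_le _ _).trans (Finset.sum_le_sum fun s _ => ?_)
  split_ifs with h
  · rw [norm_smul, mul_comm, Real.norm_eq_abs]
    gcongr
    exact le_rad x s h
  · rw [norm_zero]
    exact mul_nonneg (norm_nonneg _) (Real.sqrt_nonneg _)

theorem conn_aux {Y E : Type*} [TopologicalSpace Y] [NormedAddCommGroup E] [NormedSpace ℝ E]
    {Ω₀ : Set Y} (hΩ : IsConnected Ω₀) (j : Y → E) (hj : Continuous j) {Ω : Set E}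
    (h1 : j '' Ω₀ ⊆ Ω) (h2 : ∀ x ∈ Ω, ∃ y ∈ Ω₀, segment ℝ (j y) x ⊆ Ω) : IsConnected Ω := by
  obtain ⟨y1, hy1⟩ := hΩ.nonempty
  refine ⟨⟨j y1, h1 ⟨y1, hy1, rfl⟩⟩, isPreconnected_of_forall (j y1) fun x hx => ?_⟩
  obtain ⟨y, hy, hs⟩ := h2 x hx
  refine ⟨j '' Ω₀ ∪ segment ℝ (j y) x, Set.union_subset h1 hs, Or.inl ⟨y1, hy1, rfl⟩,
    Or.inr (right_mem_segment _ _ _), ?_⟩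
  exact IsPreconnected.union (j y) ⟨y, hy, rfl⟩ (left_mem_segment _ _ _)
    (hΩ.isPreconnected.image _ hj.continuousOn) (convex_segment _ _).isPreconnected

/-- the domain of existence -/
def OM (m p : ℕ) (Ω₀ : Set (Fin (p + 1) → ℝ)) (e : (Fin (p + 1) → ℝ) → ℝ) :
    Set (Fin (m + 1) → ℝ) :=
  {x | ∃ y0 ∈ Ω₀, Pc m p x ∈ Metric.ball y0 (e y0) ∧ rad m p x < e y0}

variable {Ω₀ : Set (Fin (p + 1) → ℝ)} {e : (Fin (p + 1) → ℝ) → ℝ}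

theorem OM_open : IsOpen (OM m p Ω₀ e) := by
  have : OM m p Ω₀ e = ⋃ y0 ∈ Ω₀, (Pc m p ⁻¹' Metric.ball y0 (e y0) ∩ {x | rad m p x < e y0}) := by
    ext x; simp only [OM, Set.mem_setOf_eq, Set.mem_iUnion, Set.mem_inter_iff, Set.mem_preimage, exists_prop]
  rw [this]
  exact isOpen_biUnion fun y0 _ => (Metric.isOpen_ball.preimage (Pc m p).continuous).inter
    (isOpen_lt rad_cont continuous_const)

theorem OM_inj (hp : p ≤ m) (he : ∀ y ∈ Ω₀, 0 < e y) : injP m p '' Ω₀ ⊆ OM m p Ω₀ e := by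
  rintro _ ⟨y, hy, rfl⟩
  refine ⟨y, hy, ?_, ?_⟩
  · rw [Pc_injP hp]; exact Metric.mem_ball_self (he y hy)
  · have := rad_add (injP m p y) 0 0 (injP_gt y)
    simp only [smul_zero, add_zero, abs_zero, zero_mul] at this
    rw [this]; exact he y hy

theorem OM_sub (hb : ∀ y ∈ Ω₀, Metric.ball y (e y) ⊆ Ω₀) :
    OM m p Ω₀ e ⊆ Omega0star m p Ω₀ := by
  rintro x ⟨y, hy, h1, _⟩
  show projP m p x ∈ Ω₀
  rw [← Pc_apply]
  exact hb y hy h1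

theorem OM_psym (v : ℕ → V) [Mul V] [One V] (hS : ∀ w ∈ Sph v m p, rsq m p w = 1) :
    PSym v m p (OM m p Ω₀ e) := by
  rintro x ⟨y, hy, h1, h2⟩ w hw
  refine ⟨y, hy, ?_, ?_⟩
  · rwa [map_add, map_smul, Pc_zero w hw.1, Pc_xppart, smul_zero, add_zero]
  · rw [rad_add _ _ _ (xppart_gt x), rad_eq m p w, hS w hw, Real.sqrt_one, mul_one,
      abs_of_nonneg (show 0 ≤ rad m p x from Real.sqrt_nonneg _)]
    exact h2

theorem OM_slice (v : ℕ → V) [Mul V] [One V] (hp : p ≤ m) (hΩ : IsConnected Ω₀)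
    (he : ∀ y ∈ Ω₀, 0 < e y) (hb : ∀ y ∈ Ω₀, Metric.ball y (e y) ⊆ Ω₀)
    (hS : ∀ w ∈ Sph v m p, rsq m p w = 1) :
    SliceDomain v m p (OM m p Ω₀ e) := by
  refine ⟨OM_open, ?_, ?_, ?_⟩
  · refine conn_aux hΩ (injP m p) injP_cont (OM_inj hp he) ?_
    rintro x ⟨y, hy, h1, h2⟩
    refine ⟨Pc m p x, hb y hy h1, ?_⟩
    rw [segment_eq_image']
    rintro _ ⟨t, ht, rfl⟩
    refine ⟨y, hy, ?_, ?_⟩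
    · simpa [Pc_injP hp] using h1
    · dsimp only
      rw [rad_add _ _ _ (injP_gt _), injP_Pc hp, rad_sub, abs_of_nonneg ht.1]
      have : 0 ≤ rad m p x := Real.sqrt_nonneg _
      nlinarith [ht.2]
  · obtain ⟨y1, hy1⟩ := hΩ.nonempty
    refine ⟨injP m p y1, OM_inj hp he ⟨y1, hy1, rfl⟩, ?_⟩
    funext s
    simp only [xqpart]
    split_ifs with h
    · rfl
    · exact injP_gt y1 s (by omega)
  · intro w hw
    have hr : ∀ y r, rad m p (pt m p w y r) = |r| := by
      intro y r
      rw [pt, rad_add _ _ _ (injP_gt y), rad_eq m p w, hS w hw, Real.sqrt_one, mul_one]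
    have hP : ∀ y r, Pc m p (pt m p w y r) = y := by
      intro y r
      rw [pt, map_add, map_smul, Pc_zero w hw.1, Pc_injP hp, smul_zero, add_zero]
    refine conn_aux hΩ (fun y => (y, (0 : ℝ))) (by fun_prop) ?_ ?_
    · rintro _ ⟨y, hy, rfl⟩
      refine ⟨y, hy, ?_, ?_⟩
      · rw [hP]; exact Metric.mem_ball_self (he y hy)
      · rw [hr, abs_zero]; exact he y hy
    · rintro ⟨y', r⟩ ⟨y, hy, h1, h2⟩
      rw [hP] at h1
      rw [hr] at h2
      refine ⟨y', hb y hy h1, ?_⟩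
      rw [segment_eq_image']
      rintro _ ⟨t, ht, rfl⟩
      refine ⟨y, hy, ?_, ?_⟩
      · rw [hP]; simpa using h1
      · rw [hr]
        simp only [Prod.snd_add, Prod.smul_snd, Prod.snd_sub, sub_zero, zero_add, smul_eq_mul,
          abs_mul, abs_of_nonneg ht.1]
        dsimp only at h2
        nlinarith [ht.2, abs_nonneg r]

theorem exist_all [CompleteSpace V] {L : ℕ → V →L[ℝ] V} (hL : Cl L m) (hp : p < m)
    (hΩo : IsOpen Ω₀)
    {A₀ : (Fin (p + 1) → ℝ) → V} (hA : AnalyticOnNhd ℝ A₀ Ω₀) :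
    ∃ e : (Fin (p + 1) → ℝ) → ℝ, (∀ y ∈ Ω₀, 0 < e y) ∧ (∀ y ∈ Ω₀, Metric.ball y (e y) ⊆ Ω₀) ∧
      ∀ x ∈ OM m p Ω₀ e, Summable (fun k => uu L m p (AA p (m - p) L A₀) k x) ∧
        ContDiffAt ℝ 1 (fun x => ∑' k, uu L m p (AA p (m - p) L A₀) k x) x ∧
        DL m L (fun x => ∑' k, uu L m p (AA p (m - p) L A₀) k x) x = 0 := by
  have hq1 : 1 ≤ m - p := by omega
  set κ := (∑ s : Fin (m + 1), ‖L s‖) + 1 with hκ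
  have hκ0 : 0 < κ := by
    have : 0 ≤ ∑ s : Fin (m + 1), ‖L s‖ := Finset.sum_nonneg fun _ _ => norm_nonneg _
    linarith
  have hloc : ∀ y : Fin (p + 1) → ℝ, ∃ e : ℝ, y ∈ Ω₀ → 0 < e ∧ Metric.ball y e ⊆ Ω₀ ∧
      ∃ η C R, TH (AA p (m - p) L A₀) y e η C R ∧ κ * e ≤ η := by
    intro y
    by_cases hy : y ∈ Ω₀
    · obtain ⟨ε, hε, C, hC, R, hR, hb⟩ := AA_bound hq1 (L := L) hA hy
      obtain ⟨ε', hε', hb'⟩ := Metric.isOpen_iff.1 hΩo y hy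
      set η := (2 * R)⁻¹ with hη
      have hη0 : 0 < η := by positivity
      set e0 := min (min ε ε') (η / κ) with he0
      have he1 : e0 ≤ ε := (min_le_left _ _).trans (min_le_left _ _)
      have he2 : e0 ≤ ε' := (min_le_left _ _).trans (min_le_right _ _)
      have he3 : e0 ≤ η / κ := min_le_right _ _
      have hsub : Metric.ball y e0 ⊆ Ω₀ := (Metric.ball_subset_ball he2).trans hb'
      have hbb : ∀ z ∈ Metric.ball y e0, ∀ k, _ := fun z hz =>
        hb z (Metric.ball_subset_ball he1 hz) (hsub hz)
      refine ⟨e0, fun _ => ⟨by positivity, hsub, η, C, R, ⟨hη0, hC, hR, ?_, ?_, ?_, ?_⟩, ?_⟩⟩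
      · rw [hη, mul_inv, mul_assoc, inv_mul_cancel₀ hR.ne']; norm_num
      · intro k z hz
        exact (AA_analytic hA k z (hsub hz)).contDiffAt.contDiffWithinAt
      · exact fun k z hz => (hbb z hz k).1
      · exact fun k z hz => (hbb z hz k).2
      · calc κ * e0 ≤ κ * (η / κ) := by gcongr
          _ = η := by field_simp
    · exact ⟨0, fun h => absurd h hy⟩
  choose e he using hloc
  refine ⟨e, fun y hy => (he y hy).1, fun y hy => (he y hy).2.1, ?_⟩
  rintro x ⟨y, hy, h1, h2⟩
  obtain ⟨hpos, -, η, C, R, hTH, hle⟩ := he y hy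
  have hx : x ∈ SS L m p y (e y) η := by
    refine ⟨h1, ?_⟩
    have h3 := Mx_norm_le (p := p) L x
    have h4 : 0 ≤ rad m p x := Real.sqrt_nonneg _
    have : κ * rad m p x < κ * e y := by gcongr
    rw [hκ] at this hle
    nlinarith
  exact ⟨hTH.summable L hx, (hTH.contDiffOn L).contDiffAt ((SS_open L y (e y) η).mem_nhds hx),
    exist_local hL hp hTH hx⟩

end ExistPart

section WeakPart
open MeasureTheory

variable {V : Type*} [NormedAddCommGroup V] [NormedSpace ℝ V] {p : ℕ}

theorem coeff_zero {c : ℕ → V} {N R δ : ℝ} (hN : 0 ≤ N) (hR : 0 < R) (hδ : 0 < δ)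
    (hc : ∀ k, ‖c k‖ ≤ N * R ^ k)
    (h : ∀ t, 0 < t → t < δ → HasSum (fun k : ℕ => t ^ k • c k) 0) : ∀ n, c n = 0 := by
  intro n
  induction n using Nat.strong_induction_on with
  | _ n ih =>
  have hb : ∀ t, 0 < t → t < min δ (2 * R)⁻¹ → ‖c n‖ ≤ t * (N * R ^ (n + 1) * 2) := by
    intro t ht0 ht
    have ht1 : t < δ := ht.trans_le (min_le_left _ _)
    have ht2 : t * R ≤ 2⁻¹ := by
      have : t < (2 * R)⁻¹ := ht.trans_le (min_le_right _ _)
      rw [mul_inv] at this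
      calc t * R ≤ (2⁻¹ * R⁻¹) * R := by gcongr
        _ = 2⁻¹ := by field_simp
    have h1 := (hasSum_nat_add_iff' (n + 1)).2 (h t ht0 ht1)
    rw [Finset.sum_range_succ, Finset.sum_eq_zero (fun k hk => by
      rw [ih k (Finset.mem_range.1 hk), smul_zero]), zero_add, zero_sub] at h1
    have h2 : HasSum (fun k : ℕ => N * (t * R) ^ (n + 1) * (2⁻¹ : ℝ) ^ k)
        (N * (t * R) ^ (n + 1) * 2) := by
      have := (hasSum_geometric_of_lt_one (r := (2⁻¹ : ℝ)) (by norm_num) (by norm_num)).mul_left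
        (N * (t * R) ^ (n + 1))
      norm_num at this ⊢
      exact this
    have h3 : ‖-(t ^ n • c n)‖ ≤ N * (t * R) ^ (n + 1) * 2 := by
      refine h1.norm_le_of_bounded h2 fun k => ?_
      rw [norm_smul, norm_pow, Real.norm_of_nonneg ht0.le]
      calc t ^ (k + (n + 1)) * ‖c (k + (n + 1))‖ ≤ t ^ (k + (n + 1)) * (N * R ^ (k + (n + 1))) := by
            gcongr; exact hc _
        _ = N * (t * R) ^ (n + 1) * (t * R) ^ k := by rw [mul_pow, mul_pow]; ring
        _ ≤ _ := by gcongr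
    rw [norm_neg, norm_smul, norm_pow, Real.norm_of_nonneg ht0.le] at h3
    have h4 : t ^ n * ‖c n‖ ≤ t ^ n * (t * (N * R ^ (n + 1) * 2)) := by
      refine h3.trans_eq ?_
      rw [mul_pow]; ring
    exact le_of_mul_le_mul_left h4 (by positivity)
  have hlim : Tendsto (fun t : ℝ => t * (N * R ^ (n + 1) * 2)) (𝓝[>] 0) (𝓝 0) := by
    have : Continuous (fun t : ℝ => t * (N * R ^ (n + 1) * 2)) := by fun_prop
    have h := this.tendsto 0
    rw [zero_mul] at h
    exact h.mono_left nhdsWithin_le_nhds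
  have : ‖c n‖ ≤ 0 := by
    refine ge_of_tendsto hlim ?_
    filter_upwards [Ioo_mem_nhdsGT (show (0 : ℝ) < min δ (2 * R)⁻¹ by positivity)] with t ht
    exact hb t ht.1 ht.2
  exact norm_le_zero_iff.1 this

variable {U : Set (Fin (p + 1) → ℝ)} {K : (Fin (p + 1) → ℝ) → V →L[ℝ] V}

theorem K_integrable (hU : IsOpen U) (hK : Continuous K) (hc : HasCompactSupport K)
    (hs : tsupport K ⊆ U) {g : (Fin (p + 1) → ℝ) → V} (hg : ContinuousOn g U) :
    Integrable (fun y => K y (g y)) := by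
  have hsup : Function.support (fun y => K y (g y)) ⊆ Function.support K := by
    intro y hy h0
    apply hy
    simp only [h0, ContinuousLinearMap.zero_apply]
  have hts : tsupport (fun y => K y (g y)) ⊆ tsupport K := closure_mono hsup
  have hcont : Continuous (fun y => K y (g y)) := by
    refine continuous_of_tsupport fun y hy => ?_
    exact hK.continuousAt.clm_apply (hg.continuousAt (hU.mem_nhds (hs (hts hy))))
  exact hcont.integrable_of_hasCompactSupport (hc.mono' (hsup.trans subset_closure))

theorem swap_sum [CompleteSpace V] (hU : IsOpen U) (hK : Continuous K) (hc : HasCompactSupport K)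
    (hs : tsupport K ⊆ U) {u : ℕ → (Fin (p + 1) → ℝ) → V} (hu : ∀ k, ContinuousOn (u k) U)
    {N R : ℝ} (hN : 0 ≤ N) (hR : 0 < R) (hb : ∀ k, ∀ y ∈ U, ‖u k y‖ ≤ N * R ^ k)
    {t : ℝ} (ht0 : 0 < t) (htR : t * R < 1) :
    HasSum (fun k : ℕ => t ^ k • ∫ y, K y (u k y)) (∫ y, K y (∑' k : ℕ, t ^ k • u k y)) := by
  have hK0 : ∀ y, y ∉ U → K y = 0 := fun y hy => image_eq_zero_of_notMem_tsupport fun h => hy (hs h)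
  have hKi : Integrable (fun y => ‖K y‖) :=
    (hK.integrable_of_hasCompactSupport hc).norm
  have hgeo : Summable fun k : ℕ => (t * R) ^ k :=
    summable_geometric_of_lt_one (by positivity) htR
  have hIntg : ∀ k : ℕ, Integrable (fun y => t ^ k • K y (u k y)) := fun k =>
    (K_integrable hU hK hc hs (hu k)).smul (t ^ k)
  have hnorm : ∀ k : ℕ, ∀ y, ‖t ^ k • K y (u k y)‖ ≤ (N * (t * R) ^ k) * ‖K y‖ := by
    intro k y
    by_cases hy : y ∈ U
    · rw [norm_smul, norm_pow, Real.norm_of_nonneg ht0.le]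
      calc t ^ k * ‖K y (u k y)‖ ≤ t ^ k * (‖K y‖ * (N * R ^ k)) := by
            gcongr
            refine (ContinuousLinearMap.le_opNorm _ _).trans ?_
            gcongr
            exact hb k y hy
        _ = _ := by rw [mul_pow]; ring
    · simp [hK0 y hy]
  have h := hasSum_integral_of_summable_integral_norm hIntg (by
    refine Summable.of_nonneg_of_le (fun k => integral_nonneg fun y => norm_nonneg _) (fun k => ?_)
      ((hgeo.mul_left N).mul_right (∫ y, ‖K y‖))
    rw [← integral_const_mul]
    exact integral_mono (hIntg k).norm (hKi.const_mul _) (hnorm k))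
  have e : (∫ y, K y (∑' k : ℕ, t ^ k • u k y)) = ∫ y, ∑' k : ℕ, t ^ k • K y (u k y) := by
    congr 1
    funext y
    by_cases hy : y ∈ U
    · have hsm : Summable fun k : ℕ => t ^ k • u k y := by
        refine Summable.of_norm_bounded (hgeo.mul_left N) fun k => ?_
        rw [norm_smul, norm_pow, Real.norm_of_nonneg ht0.le]
        calc t ^ k * ‖u k y‖ ≤ t ^ k * (N * R ^ k) := by gcongr; exact hb k y hy
          _ = _ := by rw [mul_pow]; ring
      rw [(K y).map_tsum hsm]
      simp only [map_smul]
    · simp [hK0 y hy]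
  rw [e]
  convert h using 2 with k
  rw [integral_smul]

theorem ibp [CompleteSpace V] (hU : IsOpen U) (L : ℕ → V →L[ℝ] V) {φ : (Fin (p + 1) → ℝ) → ℝ}
    (hφ : ContDiff ℝ 1 φ) (hc : HasCompactSupport φ) (hs : tsupport φ ⊆ U)
    {g : (Fin (p + 1) → ℝ) → V} (hg : ContDiffOn ℝ 1 g U) :
    ∫ y, (φ y • (1 : V →L[ℝ] V)) (DL p L g y)
      = ∫ y, (-∑ s : Fin (p + 1), fderiv ℝ φ y (Pi.single s 1) • L s) (g y) := by
  have hdφ : ∀ s : Fin (p + 1), Continuous fun y => fderiv ℝ φ y (Pi.single s 1) := fun s =>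
    (hφ.continuous_fderiv (by simp)).clm_apply continuous_const
  have hsφ : ∀ s : Fin (p + 1), tsupport (fun y => fderiv ℝ φ y (Pi.single s 1)) ⊆ tsupport φ :=
    fun s => tsupport_fderiv_apply_subset ℝ _
  have hcφ : ∀ s : Fin (p + 1), HasCompactSupport (fun y => fderiv ℝ φ y (Pi.single s 1)) :=
    fun s => hc.of_isClosed_subset (isClosed_tsupport _) (hsφ s)
  have gen : ∀ (ψ : (Fin (p + 1) → ℝ) → ℝ), Continuous ψ → HasCompactSupport ψ → tsupport ψ ⊆ U →
      ∀ h : (Fin (p + 1) → ℝ) → V, ContinuousOn h U → Integrable (fun y => ψ y • h y) := by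
    intro ψ h1 h2 h3 h hh
    have := K_integrable (K := fun y => ψ y • (1 : V →L[ℝ] V)) hU (h1.smul continuous_const)
      h2.smul_right ((tsupport_smul_subset_left ψ _).trans h3) hh
    simpa using this
  have hgd : ∀ s : Fin (p + 1), ContinuousOn (fun y => fderiv ℝ g y (Pi.single s 1)) U := fun s =>
    (hg.continuousOn_fderiv_of_isOpen hU le_rfl).clm_apply continuousOn_const
  have i1 : ∀ s : Fin (p + 1), Integrable (fun y => φ y • fderiv ℝ g y (Pi.single s 1)) := fun s =>
    gen φ hφ.continuous hc hs _ (hgd s)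
  have i2 : ∀ s : Fin (p + 1), Integrable (fun y => fderiv ℝ φ y (Pi.single s 1) • g y) := fun s =>
    gen _ (hdφ s) (hcφ s) ((hsφ s).trans hs) _ hg.continuousOn
  have key : ∀ s : Fin (p + 1), ∫ y, φ y • fderiv ℝ g y (Pi.single s 1)
      = - ∫ y, fderiv ℝ φ y (Pi.single s 1) • g y := by
    intro s
    refine integral_smul_fderiv_eq_neg_fderiv_smul_of_integrable (i2 s) (i1 s)
      (gen φ hφ.continuous hc hs _ hg.continuousOn) ?_ ?_
    · exact fun x _ => (hφ.differentiable (by simp)) x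
    · exact fun x hx => (hg.contDiffAt (hU.mem_nhds (hs hx))).differentiableAt (by simp)
  have eL : ∀ y, (φ y • (1 : V →L[ℝ] V)) (DL p L g y)
      = ∑ s : Fin (p + 1), L s (φ y • fderiv ℝ g y (Pi.single s 1)) := by
    intro y
    simp [DL, PhiL_apply, Finset.smul_sum]
  have eR : ∀ y, (-∑ s : Fin (p + 1), fderiv ℝ φ y (Pi.single s 1) • L s) (g y)
      = ∑ s : Fin (p + 1), L s (-(fderiv ℝ φ y (Pi.single s 1) • g y)) := by
    intro y
    simp
  simp only [eL, eR]
  have i3 : ∀ s : Fin (p + 1), Integrable (fun y => -(fderiv ℝ φ y (Pi.single s 1) • g y)) :=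
    fun s => (i2 s).neg
  rw [integral_finset_sum _ (fun (s : Fin (p + 1)) _ => (L s).integrable_comp (i1 s)),
    integral_finset_sum _ (fun (s : Fin (p + 1)) _ => (L s).integrable_comp (i3 s))]
  refine Finset.sum_congr rfl fun s _ => ?_
  rw [(L s).integral_comp_comm (i1 s), (L s).integral_comp_comm (i3 s), key s, integral_neg]

theorem K_integral_bound (hU : IsOpen U) (hK : Continuous K) (hc : HasCompactSupport K)
    (hs : tsupport K ⊆ U) {g : (Fin (p + 1) → ℝ) → V} (hg : ContinuousOn g U)
    {B : ℝ} (hb : ∀ y ∈ U, ‖g y‖ ≤ B) :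
    ‖∫ y, K y (g y)‖ ≤ (∫ y, ‖K y‖) * B := by
  refine (norm_integral_le_integral_norm _).trans ?_
  rw [← integral_mul_const]
  refine integral_mono (K_integrable hU hK hc hs hg).norm
    ((hK.integrable_of_hasCompactSupport hc).norm.mul_const _) fun y => ?_
  by_cases hy : y ∈ U
  · refine (ContinuousLinearMap.le_opNorm _ _).trans ?_
    have := hb y hy
    gcongr
  · have : K y = 0 := image_eq_zero_of_notMem_tsupport fun h => hy (hs h)
    simp [this]

theorem weak [CompleteSpace V] (hU : IsOpen U) (L : ℕ → V →L[ℝ] V)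
    {u w : ℕ → (Fin (p + 1) → ℝ) → V} (hu : ∀ k, ContDiffOn ℝ 1 (u k) U)
    (hw : ∀ k, ContinuousOn (w k) U)
    {N R δ : ℝ} (hN : 0 ≤ N) (hR : 0 < R) (hδ : 0 < δ) (hδR : δ * R ≤ 1)
    (hbu : ∀ k, ∀ y ∈ U, ‖u k y‖ ≤ N * R ^ k) (hbw : ∀ k, ∀ y ∈ U, ‖w k y‖ ≤ N * R ^ k)
    (hC : ∀ t, 0 < t → t < δ → ContDiffOn ℝ 1 (fun y => ∑' k : ℕ, t ^ k • u k y) U)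
    (hD : ∀ t, 0 < t → t < δ → ∀ y ∈ U,
      DL p L (fun y => ∑' k : ℕ, t ^ k • u k y) y = ∑' k : ℕ, t ^ k • w k y) (k : ℕ) :
    Set.EqOn (DL p L (u k)) (w k) U := by
  have hDu : ContinuousOn (DL p L (u k)) U :=
    (PhiL p L).continuous.comp_continuousOn ((hu k).continuousOn_fderiv_of_isOpen hU le_rfl)
  have hcont : ContinuousOn (fun y => DL p L (u k) y - w k y) U := hDu.sub (hw k)
  have hae : ∀ᵐ y : Fin (p + 1) → ℝ, y ∈ U → DL p L (u k) y - w k y = 0 := by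
    refine hU.ae_eq_zero_of_integral_contDiff_smul_eq_zero
      (hcont.locallyIntegrableOn hU.measurableSet) fun φ hφ hc hs => ?_
    have hφ1 : ContDiff ℝ 1 φ := hφ.of_le (by exact_mod_cast le_top)
    set K1 : (Fin (p + 1) → ℝ) → V →L[ℝ] V := fun y => φ y • (1 : V →L[ℝ] V) with hK1
    set K2 : (Fin (p + 1) → ℝ) → V →L[ℝ] V :=
      fun y => -∑ s : Fin (p + 1), fderiv ℝ φ y (Pi.single s 1) • L s with hK2
    have c1 : Continuous K1 := hφ1.continuous.smul continuous_const
    have c2 : Continuous K2 := by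
      refine (continuous_finset_sum _ fun s _ => ?_).neg
      exact ((hφ1.continuous_fderiv (by simp)).clm_apply continuous_const).smul continuous_const
    have ss1 : tsupport K1 ⊆ tsupport φ := tsupport_smul_subset_left φ _
    have ss2 : tsupport K2 ⊆ tsupport φ := by
      refine (closure_mono (t := Function.support (fderiv ℝ φ)) ?_).trans
        (tsupport_fderiv_subset ℝ)
      intro y hy h0
      apply hy
      simp [hK2, h0]
    have cs1 : HasCompactSupport K1 := hc.of_isClosed_subset (isClosed_tsupport _) ss1
    have cs2 : HasCompactSupport K2 := hc.of_isClosed_subset (isClosed_tsupport _) ss2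
    have su1 := ss1.trans hs
    have su2 := ss2.trans hs
    have hcoef : ∀ n, (∫ y, K1 y (w n y)) - ∫ y, K2 y (u n y) = 0 := by
      set I := (∫ y, ‖K1 y‖) + ∫ y, ‖K2 y‖ with hI
      have hI1 : 0 ≤ ∫ y, ‖K1 y‖ := integral_nonneg fun _ => norm_nonneg _
      have hI2 : 0 ≤ ∫ y, ‖K2 y‖ := integral_nonneg fun _ => norm_nonneg _
      refine coeff_zero (N := I * N) (R := R) (δ := δ) (by positivity) hR hδ (fun n => ?_) ?_
      · refine (norm_sub_le _ _).trans ?_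
        have e1 := K_integral_bound hU c1 cs1 su1 (hw n) (hbw n)
        have e2 := K_integral_bound hU c2 cs2 su2 (hu n).continuousOn (hbu n)
        calc _ ≤ _ := add_le_add e1 e2
          _ = _ := by rw [hI]; ring
      · intro t ht0 ht
        have htR : t * R < 1 := (by gcongr : t * R < δ * R).trans_le hδR
        have s1 := swap_sum hU c1 cs1 su1 hw hN hR hbw ht0 htR
        have s2 := swap_sum hU c2 cs2 su2 (fun k => (hu k).continuousOn) hN hR hbu ht0 htR
        have e := ibp hU L hφ1 hc hs (hC t ht0 ht)
        have e' : (∫ y, K1 y (∑' k : ℕ, t ^ k • w k y))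
            = ∫ y, K2 y (∑' k : ℕ, t ^ k • u k y) := by
          rw [← e]
          congr 1
          funext y
          by_cases hy : y ∈ U
          · rw [hD t ht0 ht y hy]
          · have : φ y = 0 := image_eq_zero_of_notMem_tsupport fun h => hy (hs h)
            simp [hK1, this]
        have := s1.sub s2
        rw [e', sub_self] at this
        simpa only [smul_sub] using this
    have e := ibp hU L hφ1 hc hs (hu k)
    have e2 : ∫ y, K1 y (DL p L (u k) y - w k y) = 0 := by
      simp only [map_sub]
      rw [integral_sub (K_integrable hU c1 cs1 su1 hDu) (K_integrable hU c1 cs1 su1 (hw k)), e,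
        ← neg_sub, hcoef k, neg_zero]
    simpa [hK1] using e2
  have := Measure.eqOn_open_of_ae_eq (μ := volume) (f := fun y => DL p L (u k) y - w k y)
    (g := fun _ => 0) ((ae_restrict_iff' hU.measurableSet).2 hae) hU hcont continuousOn_const
  intro y hy
  exact sub_eq_zero.1 (this hy)

end WeakPart

section UniquePart

variable {V : Type*} [NormedAddCommGroup V] [NormedSpace ℝ V] {m p : ℕ}

/-- `injP` as a continuous linear map -/
noncomputable def Ic (m p : ℕ) : (Fin (p + 1) → ℝ) →L[ℝ] (Fin (m + 1) → ℝ) :=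
  ContinuousLinearMap.pi fun s : Fin (m + 1) => if h : (s : ℕ) < p + 1 then
    ContinuousLinearMap.proj (R := ℝ) (φ := fun _ : Fin (p + 1) => ℝ) ⟨(s : ℕ), h⟩ else 0

theorem Ic_apply (y : Fin (p + 1) → ℝ) : Ic m p y = injP m p y := by
  funext s
  simp only [Ic, ContinuousLinearMap.pi_apply, injP]
  split_ifs <;> simp

theorem Ic_single (hp : p ≤ m) (s : Fin (p + 1)) :
    Ic m p (Pi.single s 1) = Pi.single (⟨(s : ℕ), by omega⟩ : Fin (m + 1)) 1 := by
  rw [Ic_apply]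
  funext t
  simp only [injP]
  split_ifs with h
  · by_cases hts : (⟨(t : ℕ), h⟩ : Fin (p + 1)) = s
    · subst hts; simp
    · have : t ≠ ⟨(s : ℕ), by omega⟩ := by
        intro e; apply hts; ext; simp [e]
      simp [this, hts]
  · have : t ≠ ⟨(s : ℕ), by omega⟩ := by
      intro e; have := congrArg Fin.val e; simp at this; omega
    simp [this]

/-- ray point -/
noncomputable def XX (m p : ℕ) (y : Fin (p + 1) → ℝ) (t : ℝ) : Fin (m + 1) → ℝ :=
  Ic m p y + t • Pi.single (Fin.last m) (1 : ℝ)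

theorem XX_cont : Continuous fun z : (Fin (p + 1) → ℝ) × ℝ => XX m p z.1 z.2 := by
  unfold XX; fun_prop

theorem Pc_XX (hp : p < m) (y : Fin (p + 1) → ℝ) (t : ℝ) : Pc m p (XX m p y t) = y := by
  rw [XX, map_add, map_smul, Pc_single_gt _ (by simpa using hp), Ic_apply, Pc_injP hp.le]
  simp

theorem Mx_XX (L : ℕ → V →L[ℝ] V) (hp : p < m) (y : Fin (p + 1) → ℝ) (t : ℝ) :
    Mx L m p (XX m p y t) = t • L m := by
  rw [XX, map_add, map_smul, Mx_single_gt _ (by simpa using hp)]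
  have : Mx L m p (Ic m p y) = 0 := by
    rw [Mx_apply]
    refine Finset.sum_eq_zero fun s _ => ?_
    split_ifs with h
    · rw [Ic_apply, injP_gt _ _ h, zero_smul]
    · rfl
  simp [this]

theorem uu_XX (L : ℕ → V →L[ℝ] V) (hp : p < m) (a : ℕ → (Fin (p + 1) → ℝ) → V) (k : ℕ)
    (y : Fin (p + 1) → ℝ) (t : ℝ) : uu L m p a k (XX m p y t) = t ^ k • (L m ^ k) (a k y) := by
  rw [uu, Pc_XX hp, Mx_XX L hp, smul_pow]; rfl

theorem Lm_lower {T : V →L[ℝ] V} (hT : T * T = -1) (a : V) : ∀ k : ℕ,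
    ‖a‖ ≤ (‖T‖ + 1) * ‖(T ^ k) a‖
  | 0 => by
    have := norm_nonneg T
    have := norm_nonneg a
    simp; nlinarith
  | 1 => by
    have h : T (T a) = -a := by
      have := congrArg (fun S : V →L[ℝ] V => S a) hT
      simpa using this
    have h1 : ‖a‖ ≤ ‖T‖ * ‖T a‖ := by
      rw [← norm_neg, ← h]; exact T.le_opNorm _
    have := norm_nonneg (T a)
    rw [pow_one]; nlinarith
  | k + 2 => by
    have h := Lm_lower hT a k
    have : T ^ (k + 2) = -(T ^ k) := by rw [pow_add, pow_two, hT]; simp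
    rw [this]; simpa using h

/-- partial derivatives in the last variables, with frozen first variables -/
theorem frozen [CompleteSpace V] {L : ℕ → V →L[ℝ] V} (hL : Cl L m) (hp : p < m)
    {B : ℕ → (Fin (p + 1) → ℝ) → V} {x : Fin (m + 1) → ℝ} {η N R : ℝ}
    (hη : 0 < η) (hN : 0 ≤ N) (hR : 0 < R) (hηR : η * R < 1)
    (hb : ∀ k, ‖B k (Pc m p x)‖ ≤ N * R ^ k) (hx : ‖Mx L m p x‖ < η)
    (hd : DifferentiableAt ℝ (fun x => ∑' k, uu L m p B k x) x)
    (hD : DL m L (fun x => ∑' k, uu L m p B k x) x = 0) :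
    (∑ s : Fin (p + 1), L s (fderiv ℝ (fun x => ∑' k, uu L m p B k x) x
        (Pi.single (⟨(s : ℕ), by omega⟩ : Fin (m + 1)) 1)))
      = ∑' k, (cc (m - p) (k + 1) : ℝ) • (Mx L m p x ^ k) (B (k + 1) (Pc m p x)) := by
  set y := Pc m p x with hy
  set f := fun x => ∑' k, uu L m p B k x with hf
  let a : ℕ → (Fin (p + 1) → ℝ) → V := fun k _ => B k y
  have hTH : TH a y 1 η N R :=
    { eta := hη, C0 := hN, R0 := hR, etaR := hηR
      diff := fun k => contDiffOn_const
      b0 := fun k _ _ => hb k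
      b1 := fun k z _ => by
        have : fderiv ℝ (a k) z = 0 := by simp [a]
        rw [this, norm_zero]; positivity }
  have hxS : x ∈ SS L m p y 1 η := ⟨by rw [← hy]; exact Metric.mem_ball_self one_pos, hx⟩
  set F := fun x => ∑' k, uu L m p a k x with hF
  have hFd : DifferentiableAt ℝ F x := (hTH.hasFDerivAt L hxS).differentiableAt
  have h1 := hTH.DL_eq L hxS
  have e1 : ∀ k, DL m L (uu L m p a k) x
      = - ((cc (m - p) k : ℝ) • (Mx L m p x ^ (k - 1)) (B k y)) := by
    intro k
    rw [DL_uu hL hp x k (by simp [a])]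
    have : DL p (Lk L k) (a k) (Pc m p x) = 0 := by simp [DL, a]
    rw [this, map_zero, zero_sub]
  simp only [e1] at h1
  have h2 : HasSum (fun k => (cc (m - p) (k + 1) : ℝ) • (Mx L m p x ^ k) (B (k + 1) y))
      (-DL m L F x) := by
    have h3 := h1.neg
    simp only [neg_neg] at h3
    have h4 := (hasSum_nat_add_iff' 1).2 h3
    simpa [cc] using h4
  rw [h2.tsum_eq]
  have hle : ∀ s : Fin (m + 1), (s : ℕ) ≤ p → fderiv ℝ F x (Pi.single s 1) = 0 := by
    intro s hs
    rw [← hFd.lineDeriv_eq_fderiv]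
    have : (fun t : ℝ => F (x + t • Pi.single s 1)) = fun _ => F x := by
      funext t
      simp only [hF, uu, map_add, map_smul, Mx_single_le s hs, a, smul_zero, add_zero]
    unfold lineDeriv
    rw [this]; simp
  have hgt : ∀ s : Fin (m + 1), p < (s : ℕ) →
      fderiv ℝ F x (Pi.single s 1) = fderiv ℝ f x (Pi.single s 1) := by
    intro s hs
    rw [← hFd.lineDeriv_eq_fderiv, ← hd.lineDeriv_eq_fderiv]
    have : (fun t : ℝ => F (x + t • Pi.single s 1)) = fun t : ℝ => f (x + t • Pi.single s 1) := by
      funext t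
      simp only [hF, hf, uu, map_add, map_smul, Pc_single_gt s hs, a, smul_zero, add_zero, hy]
    unfold lineDeriv
    rw [this]
  have s1 : DL m L F x = ∑ s : Fin (m + 1),
      if p < (s : ℕ) then L s (fderiv ℝ f x (Pi.single s 1)) else 0 := by
    rw [DL, PhiL_apply]
    refine Finset.sum_congr rfl fun s _ => ?_
    split_ifs with h
    · rw [hgt s h]
    · rw [hle s (not_lt.1 h), map_zero]
  have s2 : (∑ s : Fin (m + 1),
      if (s : ℕ) ≤ p then L s (fderiv ℝ f x (Pi.single s 1)) else 0)
      = ∑ s : Fin (p + 1), L s (fderiv ℝ f x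
        (Pi.single (⟨(s : ℕ), by omega⟩ : Fin (m + 1)) 1)) := by
    have := sum_le_eq hp.le (fun n => if h : n < m + 1 then
      L n (fderiv ℝ f x (Pi.single (⟨n, h⟩ : Fin (m + 1)) 1)) else 0)
    refine Eq.trans (Eq.trans (Finset.sum_congr rfl fun s _ => ?_) this)
      (Finset.sum_congr rfl fun s _ => ?_)
    · rw [dif_pos s.2]
    · rw [dif_pos]
  rw [← s2, s1, eq_neg_iff_add_eq_zero, ← Finset.sum_add_distrib]
  refine Eq.trans ?_ hD
  rw [DL, PhiL_apply]
  refine Finset.sum_congr rfl fun s _ => ?_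
  by_cases h : (s : ℕ) ≤ p
  · simp [h, not_lt.2 h]
  · simp [h, not_le.1 h]

/-- Baire step -/
theorem baire_step {B : ℕ → (Fin (p + 1) → ℝ) → V} {K : Set (Fin (p + 1) → ℝ)}
    {y0 : Fin (p + 1) → ℝ} {ε ρ : ℝ} (hε : 0 < ε) (hK : Metric.closedBall y0 ε ⊆ K)
    (hB : ∀ k, ContinuousOn (B k) K)
    (hb : ∀ y ∈ K, ∃ N : ℝ, ∀ k, ρ ^ k * ‖B k y‖ ≤ N) :
    ∃ y1 ε1, 0 < ε1 ∧ Metric.ball y1 ε1 ⊆ Metric.ball y0 ε ∧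
      ∃ N : ℝ, 0 ≤ N ∧ ∀ k, ∀ y ∈ Metric.ball y1 ε1, ρ ^ k * ‖B k y‖ ≤ N := by
  let S : ℕ → Set (Fin (p + 1) → ℝ) := fun n => (Metric.ball y0 ε)ᶜ ∪
    ⋂ k, Metric.closedBall y0 ε ∩ (fun y => ρ ^ k * ‖B k y‖) ⁻¹' Set.Iic (n : ℝ)
  have hS : ∀ n, IsClosed (S n) := by
    intro n
    refine Metric.isOpen_ball.isClosed_compl.union (isClosed_iInter fun k => ?_)
    exact (continuousOn_const.mul ((hB k).mono hK).norm).preimage_isClosed_of_isClosed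
      Metric.isClosed_closedBall isClosed_Iic
  have hU : ⋃ n, S n = Set.univ := by
    refine Set.eq_univ_of_forall fun y => ?_
    by_cases hy : y ∈ Metric.ball y0 ε
    · have hy' := Metric.ball_subset_closedBall hy
      obtain ⟨N, hN⟩ := hb y (hK hy')
      obtain ⟨n, hn⟩ := exists_nat_ge N
      exact Set.mem_iUnion.2 ⟨n, Or.inr (Set.mem_iInter.2 fun k => ⟨hy', (hN k).trans hn⟩)⟩
    · exact Set.mem_iUnion.2 ⟨0, Or.inl hy⟩
  obtain ⟨y1, h1, h2⟩ := (dense_iUnion_interior_of_closed hS hU).exists_mem_open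
    Metric.isOpen_ball ⟨y0, Metric.mem_ball_self hε⟩
  obtain ⟨n, hn⟩ := Set.mem_iUnion.1 h1
  obtain ⟨ε1, hε1, hsub⟩ := Metric.isOpen_iff.1 (isOpen_interior.inter Metric.isOpen_ball) y1 ⟨hn, h2⟩
  refine ⟨y1, ε1, hε1, fun y hy => (hsub hy).2, n, by positivity, fun k y hy => ?_⟩
  have := hsub hy
  rcases interior_subset this.1 with h | h
  · exact absurd this.2 h
  · exact (Set.mem_iInter.1 h k).2

theorem Lm_pow_inj {T : V →L[ℝ] V} (hT : T * T = -1) (k : ℕ) {a b : V}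
    (h : (T ^ k) a = (T ^ k) b) : a = b := by
  have := Lm_lower hT (a - b) k
  rw [map_sub, h, sub_self, norm_zero, mul_zero] at this
  exact sub_eq_zero.1 (norm_le_zero_iff.1 this)

theorem DL_Lm_pow {L : ℕ → V →L[ℝ] V} (hL : Cl L m) (hp : p < m) (k : ℕ)
    {g : (Fin (p + 1) → ℝ) → V} {y : Fin (p + 1) → ℝ} (hg : DifferentiableAt ℝ g y) :
    DL p L (fun y => (L m ^ k) (g y)) y = (L m ^ k) (DL p (Lk L k) g y) := by
  have h1 : HasFDerivAt (fun y => (L m ^ k) (g y)) ((L m ^ k).comp (fderiv ℝ g y)) y :=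
    (L m ^ k).hasFDerivAt.comp y hg.hasFDerivAt
  rw [DL, h1.fderiv, PhiL_apply, DL, PhiL_apply, map_sum]
  refine Finset.sum_congr rfl fun s _ => ?_
  have h2 := hL.mul_pow (p := p) s (by omega) hp.le (Pi.single (Fin.last m) 1) k
  rw [Mx_single_gt _ (by simpa using hp)] at h2
  have h3 := congrArg (fun S : V →L[ℝ] V => S (fderiv ℝ g y (Pi.single s 1))) h2
  simpa using h3

/-- the recursion holds on some ball inside any given ball -/
theorem recursion_local [CompleteSpace V] {L : ℕ → V →L[ℝ] V} (hL : Cl L m) (hp : p < m)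
    {Ω₀ : Set (Fin (p + 1) → ℝ)} {B : ℕ → (Fin (p + 1) → ℝ) → V}
    (hB : ∀ k, AnalyticOnNhd ℝ (B k) Ω₀) {Ω' : Set (Fin (m + 1) → ℝ)} (hΩ' : IsOpen Ω')
    (hinj : injP m p '' Ω₀ ⊆ Ω') (hsum : ∀ x ∈ Ω', Summable fun k => uu L m p B k x)
    (hC : ContDiffOn ℝ 1 (fun x => ∑' k, uu L m p B k x) Ω')
    (hD : ∀ x ∈ Ω', DL m L (fun x => ∑' k, uu L m p B k x) x = 0)
    {W : Set (Fin (p + 1) → ℝ)} (hW : IsOpen W) (hWs : W ⊆ Ω₀) {y0 : Fin (p + 1) → ℝ}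
    (hy0 : y0 ∈ W) (k : ℕ) :
    ∃ y ∈ W, DL p (Lk L k) (B k) y = (cc (m - p) (k + 1) : ℝ) • B (k + 1) y := by
  have hm := hL.sq m (by omega) le_rfl
  have hX0 : XX m p y0 0 ∈ Ω' := by
    have : XX m p y0 0 = injP m p y0 := by simp [XX, Ic_apply]
    rw [this]; exact hinj ⟨y0, hWs hy0, rfl⟩
  have hnh : ∀ᶠ z in 𝓝 (y0, (0 : ℝ)), XX m p z.1 z.2 ∈ Ω' ∧ z.1 ∈ W := by
    refine (XX_cont.continuousAt.eventually_mem (hΩ'.mem_nhds hX0)).and ?_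
    exact continuous_fst.continuousAt.eventually_mem (hW.mem_nhds hy0)
  obtain ⟨d, hd, hbox⟩ := Metric.eventually_nhds_iff.1 hnh
  set ρ := d / 2 with hρ
  have hρ0 : 0 < ρ := by positivity
  have hbox' : ∀ y ∈ Metric.closedBall y0 ρ, ∀ t, 0 ≤ t → t ≤ ρ → XX m p y t ∈ Ω' ∧ y ∈ W := by
    intro y hy t h0 h1
    refine hbox (y := (y, t)) ?_
    rw [Prod.dist_eq, max_lt_iff]
    constructor
    · exact (Metric.mem_closedBall.1 hy).trans_lt (by rw [hρ]; linarith)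
    · simp only [Real.dist_eq, sub_zero, abs_of_nonneg h0]; linarith
  set l := ‖L m‖ + 1 with hl
  have hl1 : 1 ≤ l := by have := norm_nonneg (L m); linarith
  have hl0 : 0 < l := by linarith
  have hbdd : ∀ y ∈ Metric.closedBall y0 ρ, ∃ N : ℝ, ∀ k, ρ ^ k * ‖B k y‖ ≤ N := by
    intro y hy
    have h1 := hsum _ (hbox' y hy ρ hρ0.le le_rfl).1
    obtain ⟨N, hN⟩ := h1.tendsto_atTop_zero.norm.bddAbove_range
    refine ⟨l * N, fun k => ?_⟩
    have h2 : ‖uu L m p B k (XX m p y ρ)‖ ≤ N := hN ⟨k, rfl⟩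
    rw [uu_XX L hp, norm_smul, Real.norm_of_nonneg (by positivity)] at h2
    have h3 := Lm_lower hm (B k y) k
    calc ρ ^ k * ‖B k y‖ ≤ ρ ^ k * (l * ‖(L m ^ k) (B k y)‖) := by gcongr
      _ = l * (ρ ^ k * ‖(L m ^ k) (B k y)‖) := by ring
      _ ≤ l * N := by gcongr
  have hsubW : Metric.closedBall y0 ρ ⊆ W := fun y hy => (hbox' y hy 0 le_rfl hρ0.le).2
  obtain ⟨y1, ε1, hε1, hsub, N, hN0, hN⟩ := baire_step hρ0 subset_rfl
    (fun k => ((hB k).continuousOn.mono hWs).mono hsubW) hbdd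
  set U := Metric.ball y1 ε1 with hU
  have hUc : U ⊆ Metric.closedBall y0 ρ := hsub.trans Metric.ball_subset_closedBall
  have hUΩ : U ⊆ Ω₀ := hUc.trans (hsubW.trans hWs)
  set R := ρ⁻¹ with hR
  have hR0 : 0 < R := by positivity
  have hρR : ρ * R = 1 := mul_inv_cancel₀ hρ0.ne'
  have hNB : ∀ k, ∀ y ∈ U, ‖B k y‖ ≤ N * R ^ k := by
    intro k y hy
    have h1 := hN k y hy
    calc ‖B k y‖ = (ρ * R) ^ k * ‖B k y‖ := by rw [hρR]; simp
      _ = (ρ ^ k * ‖B k y‖) * R ^ k := by rw [mul_pow]; ring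
      _ ≤ N * R ^ k := by gcongr
  have hTk : ∀ k, ‖L m ^ k‖ ≤ l ^ k := fun k =>
    norm_pow_clm_le _ hl0.le (by rw [hl]; linarith) k
  set q : ℝ := ((m - p : ℕ) : ℝ) with hq
  have hq0 : 0 ≤ q := by rw [hq]; positivity
  set N' := N * (1 + R) * (q + 1) with hN'
  have hN'0 : 0 ≤ N' := by positivity
  have hδR : ρ / (2 * l) * (2 * l * R) = 1 := by
    rw [← hρR]; field_simp
  have hXc : ∀ t, ContDiff ℝ 1 fun y => XX m p y t := fun t => by
    unfold XX; fun_prop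
  have hfun : ∀ t, (fun y => ∑' k : ℕ, t ^ k • (L m ^ k) (B k y))
      = fun y => (fun x => ∑' k, uu L m p B k x) (XX m p y t) := by
    intro t; funext y
    simp only [uu_XX L hp]
  have key := weak (U := U) Metric.isOpen_ball L (u := fun k y => (L m ^ k) (B k y))
    (w := fun k y => (cc (m - p) (k + 1) : ℝ) • (L m ^ k) (B (k + 1) y))
    (N := N') (R := 2 * l * R) (δ := ρ / (2 * l))
    (fun k => (L m ^ k).contDiff.comp_contDiffOn
      (((hB k).contDiffOn_of_completeSpace).mono hUΩ))
    (fun k => continuousOn_const.smul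
      ((L m ^ k).continuous.comp_continuousOn ((hB (k + 1)).continuousOn.mono hUΩ)))
    hN'0 (by positivity) (by positivity) hδR.le ?_ ?_ ?_ ?_ k
  · refine ⟨y1, hsubW (hUc (Metric.mem_ball_self hε1)), ?_⟩
    have h1 := key (Metric.mem_ball_self hε1)
    dsimp only at h1
    rw [DL_Lm_pow hL hp k (hB k y1 (hUΩ (Metric.mem_ball_self hε1))).differentiableAt,
      ← map_smul] at h1
    exact Lm_pow_inj hm k h1
  · intro k y hy
    have h1 := hNB k y hy
    have h2 := hTk k
    calc ‖(L m ^ k) (B k y)‖ ≤ ‖L m ^ k‖ * ‖B k y‖ := ContinuousLinearMap.le_opNorm _ _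
      _ ≤ l ^ k * (N * R ^ k) := by gcongr
      _ = (N * 1 * 1) * (1 * l * R) ^ k := by rw [one_mul, mul_pow]; ring
      _ ≤ (N * (1 + R) * (q + 1)) * (2 * l * R) ^ k := by
        gcongr <;> linarith
  · intro k y hy
    have h1 := hNB (k + 1) y hy
    have h2 := hTk k
    have h3 : (cc (m - p) (k + 1) : ℝ) ≤ (q + 1) * 2 ^ k := by
      have e1 : (cc (m - p) (k + 1) : ℝ) ≤ (k + 1 : ℕ) + q := by
        rw [hq]; exact_mod_cast cc_le (m - p) (k + 1)
      have e2 : ((k + 1 : ℕ) : ℝ) ≤ 2 ^ k := by exact_mod_cast Nat.lt_two_pow_self (n := k)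
      have e3 : (1 : ℝ) ≤ 2 ^ k := one_le_pow₀ (by norm_num)
      nlinarith
    calc ‖(cc (m - p) (k + 1) : ℝ) • (L m ^ k) (B (k + 1) y)‖
        = (cc (m - p) (k + 1) : ℝ) * ‖(L m ^ k) (B (k + 1) y)‖ := by
          rw [norm_smul, Real.norm_of_nonneg (by positivity)]
      _ ≤ (cc (m - p) (k + 1) : ℝ) * (‖L m ^ k‖ * ‖B (k + 1) y‖) := by
          gcongr; exact ContinuousLinearMap.le_opNorm _ _
      _ ≤ ((q + 1) * 2 ^ k) * (l ^ k * (N * R ^ (k + 1))) := by gcongr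
      _ = (N * R * (q + 1)) * (2 * l * R) ^ k := by rw [mul_pow, mul_pow]; ring
      _ ≤ (N * (1 + R) * (q + 1)) * (2 * l * R) ^ k := by
        gcongr; linarith
  · intro t h0 h1
    rw [hfun]
    refine hC.comp (hXc t).contDiffOn fun y hy => ?_
    refine (hbox' y (hUc hy) t h0.le (h1.le.trans ?_)).1
    exact div_le_self hρ0.le (by linarith)
  · intro t h0 h1 y hy
    have htρ : t ≤ ρ := h1.le.trans (div_le_self hρ0.le (by linarith))
    have hx := (hbox' y (hUc hy) t h0.le htρ).1
    have hfd : DifferentiableAt ℝ (fun x => ∑' k, uu L m p B k x) (XX m p y t) :=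
      (hC.contDiffAt (hΩ'.mem_nhds hx)).differentiableAt (by simp)
    have h2 := frozen hL hp (B := B) (x := XX m p y t) (η := ρ / 2) (N := N) (R := R)
      (by positivity) hN0 hR0 (by linarith) (by rw [Pc_XX hp]; exact fun k => hNB k y hy)
      (by
        rw [Mx_XX L hp, norm_smul, Real.norm_of_nonneg h0.le]
        have : t * (2 * l) < ρ := (lt_div_iff₀ (by positivity)).1 h1
        have := norm_nonneg (L m)
        nlinarith) hfd (hD _ hx)
    rw [hfun, DL, PhiL_apply]
    have hXd : HasFDerivAt (fun y => XX m p y t) (Ic m p) y := by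
      unfold XX
      exact (Ic m p).hasFDerivAt.add_const _
    have h3 : HasFDerivAt (fun y => (fun x => ∑' k, uu L m p B k x) (XX m p y t))
        ((fderiv ℝ (fun x => ∑' k, uu L m p B k x) (XX m p y t)).comp (Ic m p)) y :=
      HasFDerivAt.comp (f := fun y => XX m p y t) y hfd.hasFDerivAt hXd
    rw [h3.fderiv]
    simp only [ContinuousLinearMap.comp_apply, Ic_single hp.le]
    rw [h2]
    refine tsum_congr fun k => ?_
    rw [Pc_XX hp, Mx_XX L hp, smul_pow, smul_comm]; rfl

theorem unique_all [CompleteSpace V] {L : ℕ → V →L[ℝ] V} (hL : Cl L m) (hp : p < m)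
    {Ω₀ : Set (Fin (p + 1) → ℝ)} (hΩ₀ : IsOpen Ω₀) {B : ℕ → (Fin (p + 1) → ℝ) → V}
    (hB : ∀ k, AnalyticOnNhd ℝ (B k) Ω₀) {Ω' : Set (Fin (m + 1) → ℝ)} (hΩ' : IsOpen Ω')
    (hinj : injP m p '' Ω₀ ⊆ Ω') (hsum : ∀ x ∈ Ω', Summable fun k => uu L m p B k x)
    (hC : ContDiffOn ℝ 1 (fun x => ∑' k, uu L m p B k x) Ω')
    (hD : ∀ x ∈ Ω', DL m L (fun x => ∑' k, uu L m p B k x) x = 0) (k : ℕ) :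
    Set.EqOn (B k) (AA p (m - p) L (B 0) k) Ω₀ := by
  have hrec : ∀ k, ∀ y ∈ Ω₀,
      DL p (Lk L k) (B k) y = (cc (m - p) (k + 1) : ℝ) • B (k + 1) y := by
    intro k y hy
    by_contra hne
    have c1 : ContinuousOn (fun y => DL p (Lk L k) (B k) y
        - (cc (m - p) (k + 1) : ℝ) • B (k + 1) y) Ω₀ :=
      (DL_analytic (hB k)).continuousOn.sub (continuousOn_const.smul (hB (k + 1)).continuousOn)
    have hop := c1.isOpen_inter_preimage hΩ₀ (isOpen_compl_singleton (x := (0 : V)))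
    obtain ⟨z, hz, hz'⟩ := recursion_local hL hp hB hΩ' hinj hsum hC hD hop
      Set.inter_subset_left (y0 := y) ⟨hy, by simpa [sub_eq_zero] using hne⟩ k
    exact hz.2 (by simp [hz'])
  induction k with
  | zero => exact fun y _ => rfl
  | succ k ih =>
    intro y hy
    have hc : (cc (m - p) (k + 1) : ℝ) ≠ 0 := by
      have := le_cc (m - p) (by omega) (k + 1)
      have : cc (m - p) (k + 1) ≠ 0 := by omega
      exact_mod_cast this
    rw [AA]
    dsimp only
    rw [← DL_congr hΩ₀ ih hy, hrec k y hy, smul_smul, inv_mul_cancel₀ hc, one_smul]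

end UniquePart

section GluePart

variable {V : Type*} [NormedAddCommGroup V] [NormedSpace ℝ V] [Mul V] [One V] {conj : V → V}

/-- left multiplication as a linear map -/
def lmul (H : IsAltStarAlg V conj) (a : V) : V →ₗ[ℝ] V where
  toFun b := a * b
  map_add' := H.mul_add' a
  map_smul' r b := H.mul_smul' r a b

theorem exists_L (H : IsAltStarAlg V conj) (v : ℕ → V) :
    ∃ L : ℕ → V →L[ℝ] V, ∀ s b, L s b = v s * b := by
  have := H.finDim
  exact ⟨fun s => LinearMap.toContinuousLinearMap (lmul H (v s)), fun s b => rfl⟩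

theorem alt_lin (H : IsAltStarAlg V conj) (a b c : V) :
    a * (b * c) + b * (a * c) = (a * b + b * a) * c := by
  have h := H.alt_left (a + b) c
  simp only [H.add_mul', H.mul_add', H.alt_left] at h
  rw [H.add_mul']
  have e : a * a * c + a * (b * c) + (b * (a * c) + b * b * c)
      = a * a * c + b * a * c + (a * b * c + b * b * c) := by
    rw [h]; abel
  have e2 : a * (b * c) + b * (a * c)
      = (a * a * c + a * (b * c) + (b * (a * c) + b * b * c)) - a * a * c - b * b * c := by abel
  rw [e2, e]; abel

theorem mk_Cl (H : IsAltStarAlg V conj) {v : ℕ → V} {m : ℕ} (hv : IsHypBasis V conj v m)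
    {L : ℕ → V →L[ℝ] V} (hL : ∀ s b, L s b = v s * b) : Cl L m := by
  have neg_mul' : ∀ a b : V, (-a) * b = -(a * b) := fun a b => by
    have := H.smul_mul' (-1) a b
    simpa using this
  have mul_neg' : ∀ a b : V, a * (-b) = -(a * b) := fun a b => by
    have := H.mul_smul' (-1) a b
    simpa using this
  refine ⟨?_, ?_, ?_⟩
  · ext b; rw [hL, hv.v_zero, H.one_mul']; rfl
  · intro s h1 h2
    ext b
    have hc : conj (v s) = -v s := (neg_eq_of_add_eq_zero_right (hv.trace_zero s h1 h2)).symm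
    have h3 := hv.norm_one s h1 h2
    rw [hc, mul_neg'] at h3
    have h4 : v s * v s = -1 := by rw [← h3, neg_neg]
    show L s (L s b) = -b
    rw [hL, hL, H.alt_left, h4, neg_mul', H.one_mul']
  · intro s t h1 h2 h3 h4 hst
    ext b
    show L s (L t b) = -(L t (L s b))
    rw [hL, hL, hL, hL, eq_neg_iff_add_eq_zero, alt_lin H, hv.anticomm s t h1 h2 h3 h4 hst,
      neg_add_cancel]
    have := H.smul_mul' 0 0 b
    simpa using this

theorem sum_mul_right (H : IsAltStarAlg V conj) {ι : Type*} (S : Finset ι) (g : ι → V) (b : V) :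
    (∑ i ∈ S, g i) * b = ∑ i ∈ S, g i * b := by
  let T : V →ₗ[ℝ] V :=
    { toFun := fun a => a * b
      map_add' := fun x y => H.add_mul' x y b
      map_smul' := fun r x => H.smul_mul' r x b }
  exact map_sum T g S

theorem emb_mul (H : IsAltStarAlg V conj) {v : ℕ → V} {m p : ℕ} {L : ℕ → V →L[ℝ] V}
    (hL : ∀ s b, L s b = v s * b) (x z : Fin (m + 1) → ℝ)
    (hz : ∀ s : Fin (m + 1), z s = if p < (s : ℕ) then x s else 0) (b : V) :
    emb v m z * b = Mx L m p x b := by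
  rw [emb, sum_mul_right H, Mx_apply, ContinuousLinearMap.sum_apply]
  refine Finset.sum_congr rfl fun s _ => ?_
  rw [H.smul_mul', hz, ← hL]
  split_ifs <;> simp

theorem emb_xq_mul (H : IsAltStarAlg V conj) {v : ℕ → V} {m p : ℕ} {L : ℕ → V →L[ℝ] V}
    (hL : ∀ s b, L s b = v s * b) (x : Fin (m + 1) → ℝ) (b : V) :
    emb v m (xqpart m p x) * b = Mx L m p x b := by
  refine emb_mul H hL x _ (fun s => ?_) b
  by_cases h : (s : ℕ) ≤ p
  · simp [xqpart, h, not_lt.2 h]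
  · simp [xqpart, h, not_le.1 h]

theorem apow_mul (H : IsAltStarAlg V conj) {T : V →L[ℝ] V} {e : V} {c : ℝ}
    (he : ∀ b, e * b = T b) (hT : T * T = c • (1 : V →L[ℝ] V)) (a : V) : ∀ k : ℕ,
    apow e k * a = (T ^ k) a
  | 0 => by simp [apow, H.one_mul']
  | 1 => by
    have : apow e 1 = e * 1 := rfl
    rw [this, H.mul_one', he, pow_one]
  | k + 2 => by
    have ih := apow_mul H he hT a k
    have h1 : ∀ b, T (T b) = c • b := fun b => by
      have := congrArg (fun S : V →L[ℝ] V => S b) hT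
      simpa using this
    have h2 : apow e (k + 2) = e * (e * apow e k) := by
      simp only [apow, Function.iterate_succ_apply']
    rw [h2, he, he, h1, H.smul_mul', ih, pow_add, pow_two, hT]
    simp

theorem term_eq (H : IsAltStarAlg V conj) {v : ℕ → V} {m p : ℕ} {L : ℕ → V →L[ℝ] V}
    (hL : ∀ s b, L s b = v s * b) (hC : Cl L m) (B : ℕ → (Fin (p + 1) → ℝ) → V)
    (x : Fin (m + 1) → ℝ) (k : ℕ) :
    apow (emb v m (xqpart m p x)) k * B k (projP m p x) = uu L m p B k x := by
  rw [uu, Pc_apply]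
  exact apow_mul H (emb_xq_mul H hL x) (hC.Mx_sq x) _ k

theorem DopP_eq {v : ℕ → V} {p : ℕ} {L : ℕ → V →L[ℝ] V}
    (hL : ∀ s b, L s b = v s * b) (g : (Fin (p + 1) → ℝ) → V) : DopP v p g = DL p L g := by
  funext y
  simp [DopP, DL, PhiL_apply, hL, pdP]

theorem Dop_eq {v : ℕ → V} {m : ℕ} {L : ℕ → V →L[ℝ] V}
    (hL : ∀ s b, L s b = v s * b) (g : (Fin (m + 1) → ℝ) → V) (x : Fin (m + 1) → ℝ) :
    Dop v m 0 m g x = DL m L g x := by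
  rw [Dop, DL, PhiL_apply]
  refine Finset.sum_congr rfl fun s _ => ?_
  rw [if_pos ⟨Nat.zero_le _, by omega⟩, hL]; rfl

theorem Sph_rsq (H : IsAltStarAlg V conj) {v : ℕ → V} {m p : ℕ} {L : ℕ → V →L[ℝ] V}
    (hL : ∀ s b, L s b = v s * b) (hC : Cl L m) (w : Fin (m + 1) → ℝ) (hw : w ∈ Sph v m p) :
    rsq m p w = 1 := by
  have he : ∀ b, emb v m w * b = Mx L m p w b := emb_mul H hL w w fun s => by
    split_ifs with h
    · rfl
    · exact hw.1 s (not_lt.1 h)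
  have h1 : emb v m w = Mx L m p w 1 := by rw [← he, H.mul_one']
  have h2 := hw.2
  rw [he, h1] at h2
  have h3 := congrArg (fun S : V →L[ℝ] V => S 1) (hC.Mx_sq (p := p) w)
  have h4 : -(rsq m p w) • (1 : V) = -1 := by
    rw [← h2]; simpa using h3.symm
  have h10 : (1 : V) ≠ 0 := by
    intro h0
    have hz : ∀ b : V, b = 0 := fun b => by
      rw [← H.mul_one' b, h0]
      have := H.mul_smul' 0 b 0
      simpa using this
    have : Subsingleton V := ⟨fun a b => by rw [hz a, hz b]⟩
    have h5 := H.one_lt_finrank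
    rw [Module.finrank_zero_of_subsingleton] at h5
    omega
  have h6 : (rsq m p w - 1) • (1 : V) = 0 := by
    rw [sub_smul, one_smul, sub_eq_zero]
    rw [neg_smul] at h4
    exact neg_injective h4
  rcases smul_eq_zero.1 h6 with h | h
  · linarith
  · exact absurd h h10

end GluePart

/-- **Generalized CK-extension (monogenic).** Given a real analytic `A₀` on a domain
`Ω₀ ⊆ ℝ^{p+1}`, there is a unique sequence of real analytic functions `A_k` (`k ≥ 1`)
on `Ω₀` such that `Σ_k x_q^k A_k(x_p)` converges on a p-symmetric slice domain
`Ω₀ ⊂ Ω ⊆ Ω₀*` to a left monogenic function; the coefficients are necessarily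
`A_{2k} = (Γ(q/2)/(2^{2k} k! Γ(k+q/2))) Δ_{x_p}^k A₀` and
`A_{2k+1} = (Γ(q/2)/(2^{2k+1} k! Γ(k+q/2+1))) Δ_{x_p}^k (D_{x_p} A₀)`. -/
theorem generalized_CK_extension
    {A : Type*} [NormedAddCommGroup A] [NormedSpace ℝ A] [Mul A] [One A]
    (conj : A → A) (H : IsAltStarAlg A conj)
    (v : ℕ → A) (m p : ℕ) (hv : IsHypBasis A conj v m) (hp : p < m)
    (Ω₀ : Set (Fin (p + 1) → ℝ)) (hΩ₀ : IsOpen Ω₀) (hΩ₀conn : IsConnected Ω₀)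
    (A₀ : (Fin (p + 1) → ℝ) → A) (hA₀ : AnalyticOnNhd ℝ A₀ Ω₀) :
    ∃ Aseq : ℕ → (Fin (p + 1) → ℝ) → A,
      -- existence:
      Aseq 0 = A₀ ∧
      (∀ k, AnalyticOnNhd ℝ (Aseq k) Ω₀) ∧
      (∃ Ω : Set (Fin (m + 1) → ℝ),
        PSym v m p Ω ∧ SliceDomain v m p Ω ∧
        injP m p '' Ω₀ ⊆ Ω ∧ Ω ⊆ Omega0star m p Ω₀ ∧
        (∀ x ∈ Ω, Summable (fun k : ℕ =>
          apow (emb v m (xqpart m p x)) k * Aseq k (projP m p x))) ∧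
        Monogenic v m (fun x => ∑' k : ℕ,
          apow (emb v m (xqpart m p x)) k * Aseq k (projP m p x)) Ω) ∧
      -- the coefficients are given by the stated formulas:
      (∀ k : ℕ, ∀ y ∈ Ω₀,
        Aseq (2 * k) y =
          (Real.Gamma (((m - p : ℕ) : ℝ) / 2) /
              (2 ^ (2 * k) * (k.factorial : ℝ) *
                Real.Gamma ((k : ℝ) + ((m - p : ℕ) : ℝ) / 2))) •
            lapIterP p k A₀ y ∧
        Aseq (2 * k + 1) y =
          (Real.Gamma (((m - p : ℕ) : ℝ) / 2) /
              (2 ^ (2 * k + 1) * (k.factorial : ℝ) *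
                Real.Gamma ((k : ℝ) + ((m - p : ℕ) : ℝ) / 2 + 1))) •
            lapIterP p k (DopP v p A₀) y) ∧
      -- uniqueness: any sequence with these properties agrees with `Aseq` on `Ω₀`:
      (∀ Bseq : ℕ → (Fin (p + 1) → ℝ) → A,
        Bseq 0 = A₀ →
        (∀ k, AnalyticOnNhd ℝ (Bseq k) Ω₀) →
        (∃ Ω' : Set (Fin (m + 1) → ℝ),
          PSym v m p Ω' ∧ SliceDomain v m p Ω' ∧
          injP m p '' Ω₀ ⊆ Ω' ∧ Ω' ⊆ Omega0star m p Ω₀ ∧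
          (∀ x ∈ Ω', Summable (fun k : ℕ =>
            apow (emb v m (xqpart m p x)) k * Bseq k (projP m p x))) ∧
          Monogenic v m (fun x => ∑' k : ℕ,
            apow (emb v m (xqpart m p x)) k * Bseq k (projP m p x)) Ω') →
        ∀ k, Set.EqOn (Bseq k) (Aseq k) Ω₀) := by
  have hfd := H.finDim
  have hcomplete : CompleteSpace A := FiniteDimensional.complete ℝ A
  obtain ⟨L, hL⟩ := exists_L H v
  have hC : Cl L m := mk_Cl H hv hL
  have hS : ∀ w ∈ Sph v m p, rsq m p w = 1 := Sph_rsq H hL hC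
  obtain ⟨e, he, hb, hall⟩ := exist_all hC hp hΩ₀ hA₀
  refine ⟨AA p (m - p) L A₀, rfl, AA_analytic hA₀, ?_, ?_, ?_⟩
  · refine ⟨OM m p Ω₀ e, OM_psym v hS, OM_slice v hp.le hΩ₀conn he hb hS, OM_inj hp.le he,
      OM_sub hb, ?_, ?_, ?_⟩
    · intro x hx
      simp only [term_eq H hL hC]
      exact (hall x hx).1
    · simp only [term_eq H hL hC]
      exact fun x hx => (hall x hx).2.1.contDiffWithinAt
    · intro x hx
      simp only [term_eq H hL hC]
      rw [Dop_eq hL]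
      exact (hall x hx).2.2
  · intro k y hy
    rw [DopP_eq hL]
    exact ⟨AA_even (by omega) hC hp.le hΩ₀ hA₀ k y hy, AA_odd (by omega) hC hp.le hΩ₀ hA₀ k y hy⟩
  · rintro B rfl hB ⟨Ω', -, hsl, hinj, -, hsum, hCd, hDo⟩ k
    simp only [term_eq H hL hC] at hsum hCd hDo
    refine unique_all hC hp hΩ₀ hB hsl.1 hinj hsum hCd (fun x hx => ?_) k
    rw [← Dop_eq hL]
    exact hDo x hx

end GPSM
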